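/- arXiv:0909.0244 — 2 statements merged into one kernel-verified Lean document; each statement's English description precedes it below -/
import Mathlib

section
/- Let l ∈ R_1 and let M ≅ ⊕_{α∈Λ} S_α be a decomposition of M as a graded S-module, S = k[l], with S_α = S(−i_α)/(l^{d_α}). Then l is a strong Lefschetz element for M if and only if the family {S_α}_{α∈Λ} is totally ordered with respect to the partial order ⪯, i.e. for all α, β ∈ Λ either (i_α ≤ i_β and d_β+i_β ≤ d_α+i_α) or (i_β ≤ i_α and d_α+i_α ≤ d_β+i_β). -/
open MvPolynomial TensorProduct

/-- `gr` is a grading making `M` a graded module over the standard graded polynomial ring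
`k[x_1, …, x_n]`: `M` is the internal direct sum of the subspaces `gr i`, and homogeneous
polynomials of degree `i` map `gr j` into `gr (i + j)`. -/
def IsGrading (k : Type*) [Field k] (n : ℕ) {M : Type*} [AddCommGroup M] [Module k M]
    [Module (MvPolynomial (Fin n) k) M] (gr : ℕ → Submodule k M) : Prop :=
  DirectSum.IsInternal gr ∧
    ∀ (i j : ℕ) (r : MvPolynomial (Fin n) k), r ∈ homogeneousSubmodule (Fin n) k i →
      ∀ x ∈ gr j, r • x ∈ gr (i + j)

/-- The scalar `z` satisfies the strong Lefschetz condition for the grading `gr`: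
for all nonnegative `a` and `d`, multiplication by `z ^ a` maps `gr d` to `gr (d + a)`
injectively or surjectively. -/
def IsSLAction {k A T : Type*} [Field k] [CommRing A] [AddCommGroup T] [Module k T]
    [Module A T] (gr : ℕ → Submodule k T) (z : A) : Prop :=
  ∀ a d : ℕ, (∀ x ∈ gr d, z ^ a • x = 0 → x = 0) ∨
    (∀ w ∈ gr (d + a), ∃ x ∈ gr d, z ^ a • x = w)

/-- The data `(iv α, dv α, e α)` exhibits a degree-zero decomposition
`T ≅ ⊕_α k[z](-(iv α))/(z^(dv α))` of the graded module `T` as a graded `k[z]`-module: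
each `e α` is homogeneous of degree `iv α`, is killed by `z ^ dv α`, the elements
`z ^ j • e α` (`j < dv α`) are homogeneous of degree `iv α + j` and form a `k`-basis of `T`. -/
def IsDecomp {k A T : Type*} [Field k] [CommRing A] [AddCommGroup T] [Module k T]
    [Module A T] (gr : ℕ → Submodule k T) (z : A) {Λ : Type*} (iv dv : Λ → ℕ)
    (e : Λ → T) : Prop :=
  (∀ α, 1 ≤ dv α) ∧ (∀ (α : Λ) (j : ℕ), j < dv α → z ^ j • e α ∈ gr (iv α + j)) ∧
    (∀ α, z ^ dv α • e α = 0) ∧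
    LinearIndependent k (fun q : Σ α : Λ, Fin (dv α) => z ^ (q.2 : ℕ) • e q.1) ∧
    Submodule.span k (Set.range (fun q : Σ α : Λ, Fin (dv α) => z ^ (q.2 : ℕ) • e q.1)) = ⊤

/-- `p` is the socle degree of the graded module with grading `gr`:
the largest degree in which the module is nonzero. -/
def IsSocleDegree {k T : Type*} [Field k] [AddCommGroup T] [Module k T]
    (gr : ℕ → Submodule k T) (p : ℕ) : Prop :=
  gr p ≠ ⊥ ∧ ∀ e : ℕ, p < e → gr e = ⊥

/-- The partial order on the cyclic summands of a decomposition: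
`S_β ⪯ S_α` iff `iv α ≤ iv β` and `dv β + iv β ≤ dv α + iv α`. -/
def Prec {Λ : Type*} (iv dv : Λ → ℕ) (β α : Λ) : Prop :=
  iv α ≤ iv β ∧ dv β + iv β ≤ dv α + iv α

/-- A decomposition with data `(iv, dv)` is almost centered if whenever `S_β ⪯ S_α` one has
`|L_{αβ} - R_{αβ}| ≤ 1`, where `L_{αβ} = iv β - iv α` and
`R_{αβ} = (dv α + iv α) - (dv β + iv β)`. -/
def AlmostCentered {Λ : Type*} (iv dv : Λ → ℕ) : Prop :=
  ∀ α β : Λ, Prec iv dv β α →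
    |((iv β : ℤ) - (iv α : ℤ)) - (((dv α : ℤ) + (iv α : ℤ)) - ((dv β : ℤ) + (iv β : ℤ)))| ≤ 1

/-!
Multiplication by `z ^ a` sends the basis vector `z ^ j • e α` to `z ^ (j + a) • e α`, which is
again a basis vector or zero. Call `{z ^ j • e α | j < dv α}`, which occupies the degrees
`[iv α, iv α + dv α)`, the string of `α`. Then `z ^ a : gr d → gr (d + a)` fails to be injective
exactly when some string lives in degree `d` but has ended by degree `d + a`, and fails to be
surjective exactly when some string lives in degree `d + a` but starts after degree `d`. Both fail
together, for suitable `a` and `d`, precisely when one string starts and ends strictly before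
another, that is, when the two are incomparable.
-/

theorem span_image_fiber_eq_of_iSupIndep {R M ι κ : Type*} [Ring R] [AddCommGroup M] [Module R M]
    {gr : κ → Submodule R M} (hgr : iSupIndep gr) {v : ι → M}
    (hv : Submodule.span R (Set.range v) = ⊤) {deg : ι → κ} (hdeg : ∀ i, v i ∈ gr (deg i)) (d : κ) :
    Submodule.span R (v '' {i | deg i = d}) = gr d := by
  have span_le : (fun d => Submodule.span R (v '' {i | deg i = d})) ≤ gr := fun d =>
    Submodule.span_le.mpr (by rintro _ ⟨i, rfl, rfl⟩; exact hdeg i)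
  have iSup_span : ⨆ d, Submodule.span R (v '' {i | deg i = d}) = ⊤ := by
    rw [← Submodule.span_iUnion, ← Set.image_iUnion,
      Set.iUnion_eq_univ_iff.mpr fun i => ⟨deg i, rfl⟩, Set.image_univ, hv]
  exact congrFun ((hgr.le_iff_eq_of_iSup_eq_top iSup_span).mp span_le) d

theorem forall_shift_iff_prec_total {Λ : Type*} {iv dv : Λ → ℕ} (hdv : ∀ α, 1 ≤ dv α) :
    (∀ a d : ℕ, (∀ q : Σ α, Fin (dv α), iv q.1 + q.2 = d → q.2 + a < dv q.1) ∨
      (∀ q : Σ α, Fin (dv α), iv q.1 + q.2 = d + a → a ≤ q.2)) ↔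
    ∀ α β : Λ, Prec iv dv β α ∨ Prec iv dv α β := by
  constructor
  · intro hshift
    have end_le_end_of_start_lt_start (α β : Λ) (hstart : iv α < iv β) :
        dv β + iv β ≤ dv α + iv α := by
      by_contra! hend
      have hα := hdv α
      have hβ := hdv β
      rcases hshift (iv β + dv β - 1 - iv α) (iv α) with hinj | hsurj
      · have : 0 + (iv β + dv β - 1 - iv α) < dv α := hinj ⟨α, 0, hα⟩ rfl
        omega
      · have : iv β + dv β - 1 - iv α ≤ dv β - 1 :=
          hsurj ⟨β, dv β - 1, by omega⟩ (by dsimp only; omega)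
        omega
    intro α β
    have hαβ := end_le_end_of_start_lt_start α β
    have hβα := end_le_end_of_start_lt_start β α
    unfold Prec
    omega
  · intro htotal a d
    by_contra! h
    obtain ⟨⟨⟨α, i⟩, hi, hα⟩, ⟨β, j⟩, hj, hβ⟩ := h
    have := i.isLt
    have := j.isLt
    have hprec := htotal α β
    unfold Prec at hprec
    dsimp only at hi hα hj hβ
    omega

namespace IsDecomp

variable {k A T : Type*} [Field k] [CommRing A] [AddCommGroup T] [Module k T] [Module A T]
  {gr : ℕ → Submodule k T} {z : A} {Λ : Type*} {iv dv : Λ → ℕ} {e : Λ → T}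

/-- The `k`-basis `z ^ j • e α`, `j < dv α`, of a module decomposed into the strings generated by
the `e α`, indexed by the pairs `⟨α, j⟩`. -/
noncomputable def basis (h : IsDecomp gr z iv dv e) : Module.Basis (Σ α, Fin (dv α)) k T :=
  .mk h.2.2.2.1 h.2.2.2.2.ge

theorem basis_apply (h : IsDecomp gr z iv dv e) (q : Σ α, Fin (dv α)) :
    h.basis q = z ^ (q.2 : ℕ) • e q.1 :=
  Module.Basis.mk_apply ..

theorem basis_mem (h : IsDecomp gr z iv dv e) (q : Σ α, Fin (dv α)) :
    h.basis q ∈ gr (iv q.1 + q.2) :=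
  h.basis_apply q ▸ h.2.1 q.1 q.2 q.2.isLt

theorem span_basis_eq (h : IsDecomp gr z iv dv e) (hgr : iSupIndep gr) (d : ℕ) :
    Submodule.span k (h.basis '' {q | iv q.1 + q.2 = d}) = gr d :=
  span_image_fiber_eq_of_iSupIndep hgr h.basis.span_eq h.basis_mem d

theorem pow_smul_basis_of_lt (h : IsDecomp gr z iv dv e) {a : ℕ} {q : Σ α, Fin (dv α)}
    (hq : q.2 + a < dv q.1) : z ^ a • h.basis q = h.basis ⟨q.1, q.2 + a, hq⟩ := by
  rw [basis_apply, basis_apply, smul_smul, ← pow_add, add_comm]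

theorem pow_smul_basis_of_le (h : IsDecomp gr z iv dv e) {a : ℕ} {q : Σ α, Fin (dv α)}
    (hq : dv q.1 ≤ q.2 + a) : z ^ a • h.basis q = 0 := by
  rw [basis_apply, smul_smul, ← pow_add, add_comm, ← Nat.sub_add_cancel hq, pow_add, mul_smul,
    h.2.2.1, smul_zero]

theorem exists_pow_smul_basis_eq (h : IsDecomp gr z iv dv e) {a d : ℕ} {q : Σ α, Fin (dv α)}
    (hq : iv q.1 + q.2 = d + a) (ha : a ≤ q.2) : ∃ x ∈ gr d, z ^ a • x = h.basis q := by
  obtain ⟨α, j⟩ := q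
  let p : Σ α, Fin (dv α) := ⟨α, j - a, by omega⟩
  have hp : p.2 + a = (j : ℕ) := Nat.sub_add_cancel ha
  have hd : iv p.1 + p.2 = d := by dsimp only [p] at hq ⊢; omega
  refine ⟨h.basis p, hd ▸ h.basis_mem p, ?_⟩
  simp only [h.pow_smul_basis_of_lt (hp.trans_lt j.isLt), hp, p]

variable [SMulCommClass A k T]

theorem pow_smul_mem_span_basis (h : IsDecomp gr z iv dv e) (a : ℕ) (x : T) :
    z ^ a • x ∈ Submodule.span k (h.basis '' {q | a ≤ q.2}) := by
  suffices ⊤ ≤ (Submodule.span k (h.basis '' {q | a ≤ q.2})).comap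
      (DistribSMul.toLinearMap k T (z ^ a)) from this Submodule.mem_top
  rw [← h.basis.span_eq, Submodule.span_le]
  rintro _ ⟨q, rfl⟩
  rw [SetLike.mem_coe, Submodule.mem_comap, DistribSMul.toLinearMap_apply]
  rcases lt_or_ge (q.2 + a) (dv q.1) with hlt | hle
  · rw [h.pow_smul_basis_of_lt hlt]
    exact Submodule.subset_span ⟨_, Nat.le_add_left a q.2, rfl⟩
  · rw [h.pow_smul_basis_of_le hle]
    exact Submodule.zero_mem _

theorem forall_pow_smul_eq_zero_iff (h : IsDecomp gr z iv dv e) (hgr : iSupIndep gr) (a d : ℕ) :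
    (∀ x ∈ gr d, z ^ a • x = 0 → x = 0) ↔
      ∀ q : Σ α, Fin (dv α), iv q.1 + q.2 = d → q.2 + a < dv q.1 := by
  constructor
  · rintro hinj q rfl
    by_contra! hq
    exact h.basis.ne_zero q (hinj _ (h.basis_mem q) (h.pow_smul_basis_of_le hq))
  · intro hlt x hx hzx
    let v : {q : Σ α, Fin (dv α) | iv q.1 + q.2 = d} → T := fun q => h.basis q
    let shift (q : {q : Σ α, Fin (dv α) | iv q.1 + q.2 = d}) : Σ α, Fin (dv α) :=
      ⟨q.1.1, q.1.2 + a, hlt q q.2⟩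
    have shift_injective : Function.Injective shift := by
      rintro ⟨⟨α, i⟩, hi⟩ ⟨⟨β, j⟩, hj⟩ hij
      obtain rfl : α = β := congrArg Sigma.fst hij
      simpa [shift, Fin.ext_iff] using hij
    have linearIndependent_shift :
        LinearIndependent k (DistribSMul.toLinearMap k T (z ^ a) ∘ v) := by
      convert h.basis.linearIndependent.comp shift shift_injective using 1
      exact funext fun q => h.pow_smul_basis_of_lt (hlt q q.2)
    rw [← h.span_basis_eq hgr, Set.image_eq_range] at hx
    exact Submodule.disjoint_def.mp (Submodule.range_ker_disjoint linearIndependent_shift) x hx hzx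

theorem forall_exists_pow_smul_eq_iff (h : IsDecomp gr z iv dv e) (hgr : iSupIndep gr) (a d : ℕ) :
    (∀ w ∈ gr (d + a), ∃ x ∈ gr d, z ^ a • x = w) ↔
      ∀ q : Σ α, Fin (dv α), iv q.1 + q.2 = d + a → a ≤ q.2 := by
  constructor
  · intro hsurj q hq
    obtain ⟨x, -, hx⟩ := hsurj (h.basis q) (hq ▸ h.basis_mem q)
    by_contra ha
    exact h.basis.linearIndependent.notMem_span_image (s := {q | a ≤ q.2}) ha
      (hx ▸ h.pow_smul_mem_span_basis a x)
  · intro hle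
    suffices gr (d + a) ≤ (gr d).map (DistribSMul.toLinearMap k T (z ^ a)) from fun w hw => this hw
    rw [← h.span_basis_eq hgr, Submodule.span_le]
    rintro _ ⟨q, hq, rfl⟩
    exact h.exists_pow_smul_basis_eq hq (hle q hq)

end IsDecomp

theorem statement3_general {k A T : Type*} [Field k] [CommRing A] [AddCommGroup T] [Module k T]
    [Module A T] [SMulCommClass A k T] {gr : ℕ → Submodule k T} (hgr : iSupIndep gr) {z : A}
    {Λ : Type*} {iv dv : Λ → ℕ} {e : Λ → T} (hdec : IsDecomp gr z iv dv e) :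
    IsSLAction gr z ↔ ∀ α β : Λ, Prec iv dv β α ∨ Prec iv dv α β := by
  simp only [IsSLAction, hdec.forall_pow_smul_eq_zero_iff hgr,
    hdec.forall_exists_pow_smul_eq_iff hgr]
  exact forall_shift_iff_prec_total hdec.1

/-- Let `l ∈ R_1` and let `M ≅ ⊕_{α ∈ Λ} S_α` be a decomposition of `M` as a
graded `S = k[l]`-module, with `S_α = S(-i_α)/(l^{d_α})`.  Then `l` is a strong Lefschetz
element for `M` if and only if the family `{S_α}` is totally ordered with respect to `⪯`:
for all `α, β ∈ Λ`, either `S_β ⪯ S_α` or `S_α ⪯ S_β`. -/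
theorem statement3 {k : Type} [Field k] [CharZero k] {n : ℕ} {M : Type} [AddCommGroup M]
    [Module k M] [Module (MvPolynomial (Fin n) k) M]
    [IsScalarTower k (MvPolynomial (Fin n) k) M]
    [Module.Finite (MvPolynomial (Fin n) k) M] [FiniteDimensional k M]
    (gr : ℕ → Submodule k M) (hgr : IsGrading k n gr)
    (l : MvPolynomial (Fin n) k) (hl : l ∈ homogeneousSubmodule (Fin n) k 1)
    {Λ : Type} [Fintype Λ] (iv dv : Λ → ℕ) (e : Λ → M)
    (hdec : IsDecomp gr l iv dv e) :
    IsSLAction gr l ↔ ∀ α β : Λ, Prec iv dv β α ∨ Prec iv dv α β :=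
  statement3_general hgr.1.submodule_iSupIndep hdec
end

section
/- Let l ∈ R_1 be a strong Lefschetz element for M, S = k[l], and let M ≅ ⊕_{α∈Λ} S(−i_α)/(l^{d_α}) be the decomposition of M as a graded S-module. Then the graded R[y]-module M ⊗_k k[y]/(y^m) has the strong Lefschetz property for all m ≥ 0 if and only if the decomposition of M as an S-module is almost centered; in this case l+y is a strong Lefschetz element of M ⊗_k k[y]/(y^m) for every m ≥ 0. -/
open MvPolynomial TensorProduct

/-- The graded `R[y]`-module `M ⊗_k k[y]/(y^m)` (with `R = k[x_1, …, x_n]`), realized as the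
quotient of the polynomial module `M[y]` by the submodule `y^m · M[y]`.  It is a module over
`R[y] = Polynomial R`, graded by total degree. -/
abbrev TruncExt (k : Type*) [Field k] (n : ℕ) (M : Type*) [AddCommGroup M]
    [Module (MvPolynomial (Fin n) k) M] (m : ℕ) : Type _ :=
  PolynomialModule (MvPolynomial (Fin n) k) M ⧸
    (Ideal.span {(Polynomial.X : Polynomial (MvPolynomial (Fin n) k)) ^ m} •
      (⊤ : Submodule (Polynomial (MvPolynomial (Fin n) k))
        (PolynomialModule (MvPolynomial (Fin n) k) M)))

/-- The total-degree grading on `M ⊗_k k[y]/(y^m)`: the degree `e` component is spanned by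
the classes of the elements `x · y^j` with `x ∈ M` homogeneous of degree `e - j`. -/
noncomputable def truncGr {k : Type*} [Field k] (n : ℕ) {M : Type*} [AddCommGroup M]
    [Module k M] [Module (MvPolynomial (Fin n) k) M]
    [IsScalarTower k (MvPolynomial (Fin n) k) M]
    (gr : ℕ → Submodule k M) (m e : ℕ) : Submodule k (TruncExt k n M m) :=
  Submodule.span k {t | ∃ (j : ℕ) (x : M), j ≤ e ∧ x ∈ gr (e - j) ∧
    t = Submodule.Quotient.mk (PolynomialModule.single (MvPolynomial (Fin n) k) j x)}

/-- Linear forms of `R[y]`: elements `r + c·y` with `r ∈ R_1` a linear form of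
`R = k[x_1, …, x_n]` and `c ∈ k`. -/
def IsLinearFormExt {k : Type*} [Field k] {n : ℕ}
    (w : Polynomial (MvPolynomial (Fin n) k)) : Prop :=
  ∃ (r : MvPolynomial (Fin n) k) (c : k), r ∈ homogeneousSubmodule (Fin n) k 1 ∧
    w = Polynomial.C r + Polynomial.C (MvPolynomial.C c) * Polynomial.X

/-!
Multiplication by `z` is strong Lefschetz exactly when the intervals of degrees occupied by its
strings are nested. Since `k[x]/(x ^ d) ⊗ k[y]/(y ^ m)` is a sum of strings under `x + y`, of
lengths `d + m - 1 - 2 * j` and centered at the same degree (Clebsch–Gordan, obtained here from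
a Mason–Stothers argument with Wronskians), the strings of `M ⊗ k[y]/(y ^ m)` under `l + y` are
determined by those of `M` under `l`. They are nested for all `m` if and only if the latter are
almost centered.

If some linear form `r + c * y` is strong Lefschetz, then so is almost every form
`z + d * y` on the line joining it to `l + y`, while `z` almost always has strings of the same
degrees and lengths as `l`, and `d ≠ 0`. As rescaling `y` is harmless, the strings under `l + y`
are again nested.
-/

section PolynomialGap

open Polynomial

variable {k : Type*} [Field k]

theorem natDegree_eq_of_wronskian_eq_zero [CharZero k] {v g : k[X]} (hv : v ≠ 0) (hg : g ≠ 0)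
    (hW : wronskian v g = 0) : v.natDegree = g.natDegree := by
  have hlead := congrArg leadingCoeff (sub_eq_zero.mp hW)
  rw [leadingCoeff_mul, leadingCoeff_mul, leadingCoeff_derivative, leadingCoeff_derivative] at hlead
  have hcancel : (v.leadingCoeff * g.leadingCoeff) * (g.natDegree : k)
      = (v.leadingCoeff * g.leadingCoeff) * (v.natDegree : k) := by linear_combination hlead
  have hlead_ne : v.leadingCoeff * g.leadingCoeff ≠ 0 :=
    mul_ne_zero (leadingCoeff_ne_zero.mpr hv) (leadingCoeff_ne_zero.mpr hg)
  exact_mod_cast (mul_left_cancel₀ hlead_ne hcancel).symm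

theorem pow_pred_dvd_wronskian_pow_mul (q u v : k[X]) (a : ℕ) :
    q ^ (a - 1) ∣ wronskian v (q ^ a * u) := by
  rw [wronskian, derivative_mul, derivative_pow]
  have hpow : q ^ (a - 1) ∣ q ^ a := pow_dvd_pow _ (Nat.sub_le a 1)
  refine dvd_sub (dvd_mul_of_dvd_right (dvd_add ?_ ?_) _)
    (dvd_mul_of_dvd_right (hpow.mul_right _) _)
  · exact ((dvd_mul_left _ _).mul_right _).mul_right _
  · exact hpow.mul_right _

/- The Mason–Stothers argument: `wronskian v (q ^ d * u) = wronskian v (r ^ a * p)` is divisible by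
both `q ^ (d - 1)` and `r ^ (a - 1)`, while its degree is less than the sum of the degrees. -/
theorem natDegree_mul_add_natDegree_mul_lt_of_wronskian_ne_zero {q r u v p : k[X]} {d a : ℕ}
    (hqr : IsCoprime q r) (hsum : v + q ^ d * u = r ^ a * p)
    (hW : wronskian v (q ^ d * u) ≠ 0) :
    (d - 1) * q.natDegree + (a - 1) * r.natDegree < v.natDegree + (q ^ d * u).natDegree := by
  have hdvd_r : r ^ (a - 1) ∣ wronskian v (q ^ d * u) := by
    have hW_eq : wronskian v (q ^ d * u) = wronskian v (r ^ a * p) := by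
      rw [← hsum, wronskian_add_right, wronskian_self_eq_zero, zero_add]
    exact hW_eq ▸ pow_pred_dvd_wronskian_pow_mul r p v a
  have hdvd := hqr.pow.mul_dvd (pow_pred_dvd_wronskian_pow_mul q u v d) hdvd_r
  have hne := ne_zero_of_dvd_ne_zero hW hdvd
  calc (d - 1) * q.natDegree + (a - 1) * r.natDegree
      = (q ^ (d - 1) * r ^ (a - 1)).natDegree := by
        rw [natDegree_mul (left_ne_zero_of_mul hne) (right_ne_zero_of_mul hne), natDegree_pow,
          natDegree_pow]
    _ ≤ (wronskian v (q ^ d * u)).natDegree := natDegree_le_of_dvd hdvd hW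
    _ < v.natDegree + (q ^ d * u).natDegree := natDegree_wronskian_lt_add hW

theorem natDegree_modByMonic_X_pow_lt_of_coeff_eq_zero {f : k[X]} {s d : ℕ}
    (h0 : f %ₘ Polynomial.X ^ d ≠ 0) (hgap : ∀ i, s ≤ i → i < d → f.coeff i = 0) :
    (f %ₘ Polynomial.X ^ d).natDegree < s := by
  by_contra! hs
  have hlt : (f %ₘ Polynomial.X ^ d).natDegree < d := by
    rcases Nat.eq_zero_or_pos d with rfl | hd
    · exact absurd (by rw [pow_zero, modByMonic_one]) h0
    · simpa only [natDegree_X_pow] using natDegree_modByMonic_lt f (monic_X_pow d) fun h => by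
        simpa [hd.ne'] using congrArg natDegree h
  have hcoeff (i : ℕ) (hi : i < d) : (f %ₘ Polynomial.X ^ d).coeff i = f.coeff i := by
    conv_rhs => rw [← modByMonic_add_div f (Polynomial.X ^ d)]
    rw [Polynomial.coeff_add, coeff_X_pow_mul', if_neg hi.not_ge, add_zero]
  exact leadingCoeff_ne_zero.mpr h0 ((hcoeff _ hlt).trans (hgap _ hs hlt))

theorem eq_zero_of_coeff_X_add_one_pow_mul_eq_zero [CharZero k] {p : k[X]} {a s j : ℕ}
    (hsa : s ≤ a) (hp : p.natDegree ≤ j)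
    (hgap : ∀ i, s ≤ i → i < s + j + 1 → ((Polynomial.X + 1) ^ a * p).coeff i = 0) : p = 0 := by
  by_contra hp0
  have hdeg_one : (Polynomial.X + 1 : k[X]).natDegree = 1 := natDegree_X_add_C (1 : k)
  have hne : (Polynomial.X + 1 : k[X]) ^ a ≠ 0 := pow_ne_zero _ (X_add_C_ne_zero (1 : k))
  have hcop : IsCoprime (Polynomial.X : k[X]) (Polynomial.X + 1) := ⟨-1, 1, by ring⟩
  set f : k[X] := (Polynomial.X + 1) ^ a * p with hf
  have hfdeg : f.natDegree = a + p.natDegree := by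
    rw [hf, natDegree_mul hne hp0, natDegree_pow, hdeg_one, mul_one]
  -- Cut `f` at the gap: `v` is the part below it, `X ^ (s + j + 1) * u` the part above it.
  set v := f %ₘ Polynomial.X ^ (s + j + 1)
  set u := f /ₘ Polynomial.X ^ (s + j + 1)
  have hsplit : v + Polynomial.X ^ (s + j + 1) * u = f := modByMonic_add_div _ _
  have hv0 : v ≠ 0 := by
    intro h
    have hdvd : Polynomial.X ^ (s + j + 1) ∣ p :=
      hcop.pow.dvd_of_dvd_mul_left ((modByMonic_eq_zero_iff_dvd (monic_X_pow _)).mp h)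
    have := natDegree_le_of_dvd hdvd hp0
    rw [natDegree_X_pow] at this
    omega
  have hvdeg : v.natDegree < s := natDegree_modByMonic_X_pow_lt_of_coeff_eq_zero hv0 hgap
  have hdeg_lt : v.natDegree < f.natDegree := by omega
  have hdeg_eq : (Polynomial.X ^ (s + j + 1) * u).natDegree = f.natDegree := by
    rw [eq_sub_of_add_eq' hsplit, natDegree_sub_eq_left_of_natDegree_lt hdeg_lt]
  have hg0 : Polynomial.X ^ (s + j + 1) * u ≠ 0 := fun h => by
    rw [h, natDegree_zero] at hdeg_eq; omega
  have hW : wronskian v (Polynomial.X ^ (s + j + 1) * u) ≠ 0 := fun h =>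
    hdeg_lt.ne ((natDegree_eq_of_wronskian_eq_zero hv0 hg0 h).trans hdeg_eq)
  have := natDegree_mul_add_natDegree_mul_lt_of_wronskian_ne_zero hcop hsplit hW
  rw [natDegree_X, hdeg_one] at this
  omega

theorem exists_ne_zero_coeff_mul_eq_zero (q : k[X]) (s j : ℕ) :
    ∃ p : k[X], p ≠ 0 ∧ p.natDegree ≤ j ∧ ∀ i, s ≤ i → i < s + j → (q * p).coeff i = 0 := by
  let φ : degreeLT k (j + 1) →ₗ[k] (Fin j → k) :=
    LinearMap.pi fun i => lcoeff k (s + i) ∘ₗ LinearMap.mulLeft k q ∘ₗ (degreeLT k (j + 1)).subtype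
  have : FiniteDimensional k (degreeLT k (j + 1)) :=
    (degreeLTEquiv k (j + 1)).symm.finiteDimensional
  have hker : LinearMap.ker φ ≠ ⊥ := LinearMap.ker_ne_bot_of_finrank_lt <| by
    simp [(degreeLTEquiv k (j + 1)).finrank_eq]
  obtain ⟨⟨p, hp⟩, hpker, hp0⟩ := Submodule.exists_mem_ne_zero_of_ne_bot hker
  have hp0 : p ≠ 0 := fun h => hp0 (Subtype.ext h)
  refine ⟨p, hp0, ?_, fun i hsi hij => ?_⟩
  · exact Nat.lt_succ_iff.mp ((natDegree_lt_iff_degree_lt hp0).mpr (mem_degreeLT.mp hp))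
  · have := congrFun (LinearMap.mem_ker.mp hpker) ⟨i - s, by omega⟩
    simpa [φ, Nat.add_sub_cancel' hsi] using this

end PolynomialGap

section Strings

variable {k A T : Type*} [Field k] [AddCommGroup T] [Module k T]

theorem eq_of_le_of_iSup_eq_top_of_iSupIndep {ι : Type*} {U V : ι → Submodule k T}
    (hle : ∀ i, U i ≤ V i) (htop : ⨆ i, U i = ⊤) (hind : iSupIndep V) (i : ι) : V i = U i := by
  have hdisj : (⨆ (j) (_ : j ≠ i), U j) ⊓ V i = ⊥ :=
    ((hind i).mono_right (iSup₂_mono fun j _ => hle j)).symm.eq_bot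
  calc V i = (U i ⊔ ⨆ (j) (_ : j ≠ i), U j) ⊓ V i := by
        rw [← iSup_split_single U i, htop, top_inf_eq]
    _ = U i := by rw [sup_inf_assoc_of_le _ (hle i), hdisj, sup_bot_eq]

variable [CommRing A] [Module A T]

theorem pow_smul_eq_zero_of_le {z : A} {x : T} {d n : ℕ} (hz : z ^ d • x = 0) (hn : d ≤ n) :
    z ^ n • x = 0 := by
  rw [← Nat.sub_add_cancel hn, pow_add, mul_smul, hz, smul_zero]

theorem pow_smul_pow_sub_smul (z : A) (x : T) (a : ℕ) {i D : ℕ} (hi : i ≤ D) :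
    z ^ a • z ^ (D - i) • x = z ^ (D + a - i) • x := by
  rw [smul_smul, ← pow_add, ← Nat.add_sub_assoc hi, Nat.add_comm a]

/-- The strings of a decomposition that are nonzero in degree `D`: the string of `α` occupies the
degrees `iv α, …, iv α + dv α - 1`. -/
def stringsAt {Λ : Type*} (iv dv : Λ → ℕ) (D : ℕ) : Set Λ :=
  {α | iv α ≤ D ∧ D < iv α + dv α}

theorem mem_stringsAt {Λ : Type*} {iv dv : Λ → ℕ} {D : ℕ} {α : Λ} :
    α ∈ stringsAt iv dv D ↔ iv α ≤ D ∧ D < iv α + dv α := Iff.rfl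

/-- The strings of a decomposition are nested if a string that starts later never ends later. -/
def Nested {Λ : Type*} (iv dv : Λ → ℕ) : Prop :=
  ∀ p q, iv p < iv q → iv q + dv q ≤ iv p + dv p

theorem nested_iff_forall_stringsAt {Λ : Type*} {iv dv : Λ → ℕ} (hdv : ∀ α, 1 ≤ dv α) :
    Nested iv dv ↔ ∀ a D, stringsAt iv dv D ⊆ stringsAt iv dv (D + a) ∨
      stringsAt iv dv (D + a) ⊆ stringsAt iv dv D := by
  constructor
  · intro hn a D
    by_contra! h
    obtain ⟨p, hp, hp'⟩ := Set.not_subset.mp h.1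
    obtain ⟨q, hq, hq'⟩ := Set.not_subset.mp h.2
    have := hn p q
    simp only [mem_stringsAt] at hp hp' hq hq'
    omega
  · intro h p q hpq
    by_contra! hend
    -- In degree `D` only `p` of the two strings is alive, in degree `D + a` only `q`.
    let D := min (iv p + dv p) (iv q) - 1
    have hp := hdv p
    have hq := hdv q
    rcases h (max (iv p + dv p) (iv q) - D) D with h | h
    · have := @h p
      simp only [mem_stringsAt, D] at this
      omega
    · have := @h q
      simp only [mem_stringsAt, D] at this
      omega

namespace IsDecomp

variable {gr : ℕ → Submodule k T} {z : A} {Λ : Type*} {iv dv : Λ → ℕ} {e : Λ → T}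

theorem pow_smul_mem (h : IsDecomp gr z iv dv e) {α : Λ} {D : ℕ} (hα : α ∈ stringsAt iv dv D) :
    z ^ (D - iv α) • e α ∈ gr D := by
  obtain ⟨hle, hlt⟩ := mem_stringsAt.mp hα
  have := h.2.1 α (D - iv α) (by omega)
  rwa [Nat.add_sub_cancel' hle] at this

theorem pow_smul_eq_zero (h : IsDecomp gr z iv dv e) {α : Λ} {n : ℕ} (hn : dv α ≤ n) :
    z ^ n • e α = 0 :=
  pow_smul_eq_zero_of_le (h.2.2.1 α) hn

theorem linearIndepOn_stringsAt (h : IsDecomp gr z iv dv e) (D : ℕ) :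
    LinearIndepOn k (fun α => z ^ (D - iv α) • e α) (stringsAt iv dv D) :=
  h.2.2.2.1.comp
    (fun α : stringsAt iv dv D => ⟨α.1, ⟨D - iv α.1, by have := mem_stringsAt.mp α.2; omega⟩⟩)
    fun _ _ hαβ => Subtype.ext (congrArg Sigma.fst hαβ)

theorem eq_span_stringsAt (hind : iSupIndep gr) (h : IsDecomp gr z iv dv e) (D : ℕ) :
    gr D = Submodule.span k ((fun α => z ^ (D - iv α) • e α) '' stringsAt iv dv D) := by
  refine eq_of_le_of_iSup_eq_top_of_iSupIndep (V := gr)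
    (U := fun D => Submodule.span k ((fun α => z ^ (D - iv α) • e α) '' stringsAt iv dv D))
    (fun D => ?_) ?_ hind D
  · rw [Submodule.span_le, Set.image_subset_iff]
    exact fun α hα => h.pow_smul_mem hα
  · rw [eq_top_iff, ← h.2.2.2.2, Submodule.span_le]
    rintro _ ⟨⟨α, j⟩, rfl⟩
    refine Submodule.mem_iSup_of_mem (iv α + j) (Submodule.subset_span ⟨α, ?_, by simp⟩)
    exact mem_stringsAt.mpr (by omega)

theorem finiteDimensional [Finite Λ] (h : IsDecomp gr z iv dv e) : FiniteDimensional k T :=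
  Module.Finite.of_basis (Module.Basis.mk h.2.2.2.1 h.2.2.2.2.ge)

variable [Algebra k A] [IsScalarTower k A T]

theorem injective_iff (hind : iSupIndep gr) (h : IsDecomp gr z iv dv e) (a D : ℕ) :
    (∀ x ∈ gr D, z ^ a • x = 0 → x = 0) ↔ stringsAt iv dv D ⊆ stringsAt iv dv (D + a) := by
  constructor
  · intro hinj α hα
    by_contra hα'
    rw [mem_stringsAt] at hα hα'
    have hzero : z ^ a • z ^ (D - iv α) • e α = 0 := by
      rw [smul_smul, ← pow_add, h.pow_smul_eq_zero (by omega)]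
    exact (h.linearIndepOn_stringsAt D).ne_zero hα (hinj _ (h.pow_smul_mem hα) hzero)
  · intro hsub x hx hzx
    have hli : LinearIndepOn k (fun α => z ^ a • z ^ (D - iv α) • e α) (stringsAt iv dv D) :=
      ((h.linearIndepOn_stringsAt (D + a)).mono hsub).congr fun α hα =>
        (pow_smul_pow_sub_smul z (e α) a hα.1).symm
    rw [h.eq_span_stringsAt hind, Set.image_eq_range] at hx
    exact Submodule.disjoint_def.mp
      (Submodule.range_ker_disjoint (f := Algebra.lsmul k k T (z ^ a)) hli) x hx hzx

theorem surjective_iff (hind : iSupIndep gr) (h : IsDecomp gr z iv dv e) (a D : ℕ) :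
    (∀ w ∈ gr (D + a), ∃ x ∈ gr D, z ^ a • x = w) ↔
      stringsAt iv dv (D + a) ⊆ stringsAt iv dv D := by
  let φ : T →ₗ[k] T := Algebra.lsmul k k T (z ^ a)
  have hφ : φ '' ((fun α => z ^ (D - iv α) • e α) '' stringsAt iv dv D)
      = (fun α => z ^ (D + a - iv α) • e α) '' stringsAt iv dv D := by
    rw [Set.image_image]
    exact Set.image_congr fun α hα => pow_smul_pow_sub_smul z (e α) a hα.1
  have hmap : (∀ w ∈ gr (D + a), ∃ x ∈ gr D, z ^ a • x = w) ↔
      Submodule.span k ((fun α => z ^ (D + a - iv α) • e α) '' stringsAt iv dv (D + a)) ≤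
        Submodule.span k ((fun α => z ^ (D + a - iv α) • e α) '' stringsAt iv dv D) := by
    rw [← h.eq_span_stringsAt hind, ← hφ, ← Submodule.map_span, ← h.eq_span_stringsAt hind]
    rfl
  rw [hmap]
  refine ⟨fun hle α hα => ?_, fun hsub => Submodule.span_mono (Set.image_mono hsub)⟩
  by_contra hα'
  refine (h.linearIndepOn_stringsAt (D + a)).notMem_span hα <|
    Submodule.span_le.mpr ?_ (hle (Submodule.subset_span (Set.mem_image_of_mem _ hα)))
  rintro _ ⟨β, hβ, rfl⟩
  by_cases hβ' : β ∈ stringsAt iv dv (D + a)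
  · exact Submodule.subset_span ⟨β, ⟨hβ', fun hβα => hα' (hβα ▸ hβ)⟩, rfl⟩
  · rw [mem_stringsAt] at hβ hβ'
    simp only [h.pow_smul_eq_zero (show dv β ≤ D + a - iv β by omega), SetLike.mem_coe, zero_mem]

theorem isSLAction_iff_nested (hind : iSupIndep gr) (h : IsDecomp gr z iv dv e) :
    IsSLAction gr z ↔ Nested iv dv := by
  rw [nested_iff_forall_stringsAt h.1]
  exact forall₂_congr fun a D => or_congr (h.injective_iff hind a D) (h.surjective_iff hind a D)

end IsDecomp

variable [Algebra k A] [IsScalarTower k A T]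

theorem linearIndependent_pow_smul_of_last {J : Type*} {z : A} {len : J → ℕ} {g : J → T}
    (hz : ∀ j, z ^ len j • g j = 0)
    (hlast : LinearIndependent k fun j => z ^ (len j - 1) • g j) :
    LinearIndependent k fun q : Σ j : J, Fin (len j) => z ^ (q.2 : ℕ) • g q.1 := by
  classical
  rw [linearIndependent_iff']
  intro s c hsum
  by_contra! hc
  -- Multiplying by `z ^ B`, where `B` is the largest depth below the last element of a string
  -- that occurs in the relation, leaves a relation between last elements only.
  let depth (q : Σ j : J, Fin (len j)) : ℕ := len q.1 - 1 - q.2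
  obtain ⟨q₀, hq₀, hmax⟩ := (s.filter (c · ≠ 0)).exists_max_image depth
    (hc.imp fun q hq => Finset.mem_filter.mpr hq)
  have hlast_depth : LinearIndepOn k
      (fun q : Σ j : J, Fin (len j) => z ^ (len q.1 - 1) • g q.1) {q | depth q = depth q₀} := by
    refine hlast.comp (fun q : {q | depth q = depth q₀} => q.1.1) ?_
    rintro ⟨⟨j, i⟩, hi⟩ ⟨⟨j', i'⟩, hi'⟩ (rfl : j = j')
    have : (i : ℕ) = i' := by
      simp only [depth, Set.mem_ofPred_eq] at hi hi'
      omega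
    simp [Fin.ext this]
  have hterm (q) (hq : q ∈ s) : z ^ depth q₀ • c q • z ^ (q.2 : ℕ) • g q.1
      = if depth q = depth q₀ then c q • z ^ (len q.1 - 1) • g q.1 else 0 := by
    rw [smul_comm, smul_smul, ← pow_add]
    split_ifs with hdepth
    · rw [← hdepth, Nat.sub_add_cancel (Nat.le_sub_one_of_lt q.2.2)]
    by_cases hcq : c q = 0
    · rw [hcq, zero_smul]
    have hlt := lt_of_le_of_ne (hmax q (Finset.mem_filter.mpr ⟨hq, hcq⟩)) hdepth
    rw [pow_smul_eq_zero_of_le (hz q.1) (by simp only [depth] at hlt ⊢; omega), smul_zero]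
  have hrel : ∑ q ∈ s with depth q = depth q₀, c q • z ^ (len q.1 - 1) • g q.1 = 0 := by
    rw [Finset.sum_filter, ← Finset.sum_congr rfl hterm, ← Finset.smul_sum, hsum, smul_zero]
  rw [Finset.mem_filter] at hq₀
  exact hq₀.2 <| linearIndepOn_iff'.mp hlast_depth _ c (by simp) hrel q₀ (by simp [hq₀.1])

end Strings

section Rectangles

/-- The exponents `(i, j)` of the monomials `x ^ i * y ^ j` not divisible by `x ^ d` or `y ^ m`. -/
def rectangle (d m : ℕ) : Finset (ℕ × ℕ) :=
  Finset.range d ×ˢ Finset.range m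

theorem mem_rectangle {d m : ℕ} {q : ℕ × ℕ} : q ∈ rectangle d m ↔ q.1 < d ∧ q.2 < m := by
  rw [rectangle, Finset.mem_product, Finset.mem_range, Finset.mem_range]

variable {k A T : Type*} [Field k] [CommRing A] [AddCommGroup T] [Module k T] [Module A T]

/-- `T` is a direct sum of copies of the rectangles `k[x, y]/(x ^ dv α, y ^ m)`, generated by
elements `e α` of degree `iv α`. -/
structure IsRectDecomp (gr : ℕ → Submodule k T) (x y : A) {Λ : Type*} (iv dv : Λ → ℕ) (m : ℕ)
    (e : Λ → T) : Prop where
  one_le (α : Λ) : 1 ≤ dv α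
  pow_smul_left (α : Λ) : x ^ dv α • e α = 0
  pow_smul_right (α : Λ) : y ^ m • e α = 0
  mem (α : Λ) (i j : ℕ) : (x ^ i * y ^ j) • e α ∈ gr (iv α + i + j)
  linearIndependent : LinearIndependent k fun q : Σ α, rectangle (dv α) m =>
    (x ^ q.2.1.1 * y ^ q.2.1.2) • e q.1
  span_eq_top : Submodule.span k (Set.range fun q : Σ α, rectangle (dv α) m =>
    (x ^ q.2.1.1 * y ^ q.2.1.2) • e q.1) = ⊤

variable [Algebra k A] [IsScalarTower k A T] {x y : A} {e : T} {d m : ℕ}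

theorem pow_mul_pow_smul_eq_zero (hx : x ^ d • e = 0) (hy : y ^ m • e = 0) {q : ℕ × ℕ}
    (hq : q ∉ rectangle d m) : (x ^ q.1 * y ^ q.2) • e = 0 := by
  rw [mem_rectangle, not_and_or, not_lt, not_lt] at hq
  rcases hq with hq | hq
  · rw [mul_comm, mul_smul, pow_smul_eq_zero_of_le hx hq, smul_zero]
  · rw [mul_smul, pow_smul_eq_zero_of_le hy hq, smul_zero]

theorem aeval_smul_mem_of_isHomogeneous {φ : MvPolynomial (Fin 2) k} {D : ℕ}
    (hφ : φ.IsHomogeneous D) {W : Submodule k T}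
    (hW : ∀ i j, i + j = D → (x ^ i * y ^ j) • e ∈ W) : aeval ![x, y] φ • e ∈ W := by
  rw [aeval_def, eval₂_eq', Finset.sum_smul]
  refine W.sum_mem fun n hn => ?_
  rw [mul_smul, algebraMap_smul, Fin.prod_univ_two]
  refine W.smul_mem _ (hW _ _ ?_)
  rw [← hφ (mem_support_iff.mp hn), Finsupp.weight_apply, Finsupp.sum_fintype _ _ (by simp)]
  simp

theorem aeval_homogenize_smul (p : Polynomial k) (D : ℕ) :
    aeval ![x, y] (p.homogenize D) • e
      = ∑ q ∈ Finset.HasAntidiagonal.antidiagonal D, p.coeff q.1 • (x ^ q.1 * y ^ q.2) • e := by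
  rw [Polynomial.homogenize, map_sum, Finset.sum_smul]
  refine Finset.sum_congr rfl fun q _ => ?_
  rw [aeval_monomial, mul_smul, algebraMap_smul, Finsupp.prod_fintype _ _ (by simp)]
  simp [Fin.prod_univ_two]

theorem homogenize_X_add_one_pow_mul {p : Polynomial k} {D : ℕ} (hp : p.natDegree ≤ D) (a : ℕ) :
    ((Polynomial.X + 1) ^ a * p).homogenize (a + D)
      = (MvPolynomial.X 0 + MvPolynomial.X 1) ^ a * p.homogenize D := by
  induction a with
  | zero => simp
  | succ a ih =>
    have hdeg_one : (Polynomial.X + 1 : Polynomial k).natDegree ≤ 1 :=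
      (Polynomial.natDegree_X_add_C (1 : k)).le
    have hdeg : ((Polynomial.X + 1) ^ a * p).natDegree ≤ a + D :=
      Polynomial.natDegree_mul_le_of_le
        ((Polynomial.natDegree_pow_le_of_le a hdeg_one).trans_eq (mul_one a)) hp
    rw [pow_succ', mul_assoc, show a + 1 + D = 1 + (a + D) by omega,
      Polynomial.homogenize_mul _ _ hdeg_one hdeg, ih, pow_succ', mul_assoc]
    simp

theorem aeval_homogenize_smul_eq_zero_iff (hx : x ^ d • e = 0) (hy : y ^ m • e = 0)
    (hli : LinearIndepOn k (fun q : ℕ × ℕ => (x ^ q.1 * y ^ q.2) • e) (rectangle d m))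
    (p : Polynomial k) (D : ℕ) :
    aeval ![x, y] (p.homogenize D) • e = 0 ↔
      ∀ i j, i + j = D → i < d → j < m → p.coeff i = 0 := by
  have hsum : aeval ![x, y] (p.homogenize D) • e
      = ∑ q ∈ Finset.HasAntidiagonal.antidiagonal D with q ∈ rectangle d m,
          p.coeff q.1 • (x ^ q.1 * y ^ q.2) • e := by
    rw [aeval_homogenize_smul, Finset.sum_filter_of_ne]
    intro q _ hq
    contrapose! hq
    rw [pow_mul_pow_smul_eq_zero hx hy hq, smul_zero]
  rw [hsum]
  constructor
  · intro h i j hij hi hj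
    exact linearIndepOn_iff'.mp hli _ (fun q => p.coeff q.1)
      (fun q hq => (Finset.mem_filter.mp hq).2) h (i, j) (by simp [mem_rectangle, hij, hi, hj])
  · intro h
    refine Finset.sum_eq_zero fun q hq => ?_
    obtain ⟨hD, hq⟩ := Finset.mem_filter.mp hq
    obtain ⟨hi, hj⟩ := mem_rectangle.mp hq
    rw [h _ _ (Finset.HasAntidiagonal.mem_antidiagonal.mp hD) hi hj, zero_smul]

theorem exists_isHomogeneous_add_pow_smul [CharZero k] (hx : x ^ d • e = 0) (hy : y ^ m • e = 0)
    (hli : LinearIndepOn k (fun q : ℕ × ℕ => (x ^ q.1 * y ^ q.2) • e) (rectangle d m))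
    {j : ℕ} (hjd : j < d) (hjm : j < m) :
    ∃ φ : MvPolynomial (Fin 2) k, φ.IsHomogeneous j ∧
      (x + y) ^ (d + m - 1 - 2 * j) • aeval ![x, y] φ • e = 0 ∧
      (x + y) ^ (d + m - 1 - 2 * j - 1) • aeval ![x, y] φ • e ≠ 0 := by
  obtain ⟨p, hp0, hp, hcoeff⟩ := exists_ne_zero_coeff_mul_eq_zero (k := k)
    ((Polynomial.X + 1) ^ (d + m - 1 - 2 * j)) (d - j) j
  have hpow (a : ℕ) : (x + y) ^ a • aeval ![x, y] (p.homogenize j) • e = 0 ↔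
      ∀ i i', i + i' = a + j → i < d → i' < m → ((Polynomial.X + 1) ^ a * p).coeff i = 0 := by
    rw [← aeval_homogenize_smul_eq_zero_iff hx hy hli, homogenize_X_add_one_pow_mul hp, map_mul,
      mul_smul]
    simp
  refine ⟨p.homogenize j, Polynomial.isHomogeneous_homogenize _, ?_, fun h => hp0 ?_⟩
  · exact (hpow _).mpr fun i i' hii' hi hi' => hcoeff i (by omega) (by omega)
  refine eq_zero_of_coeff_X_add_one_pow_mul_eq_zero (a := d + m - 1 - 2 * j - 1)
    (s := d - 1 - j) (by omega) hp fun i hs hi => ?_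
  exact (hpow _).mp h i (d + m - 1 - 2 * j - 1 + j - i) (by omega) (by omega) (by omega)

theorem sum_rectangle_string_lengths (d m : ℕ) :
    ∑ j : Fin (min d m), (d + m - 1 - 2 * (j : ℕ)) = d * m := by
  have hpeel (μ : ℕ) (hd : μ ≤ d) (hm : μ ≤ m) :
      ∑ j ∈ Finset.range μ, (d + m - 1 - 2 * j) + (d - μ) * (m - μ) = d * m := by
    induction μ with
    | zero => simp
    | succ μ ih =>
      rw [← ih (by omega) (by omega), Finset.sum_range_succ]
      obtain ⟨a, rfl⟩ := Nat.exists_eq_add_of_le hd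
      obtain ⟨b, rfl⟩ := Nat.exists_eq_add_of_le hm
      rw [show μ + 1 + a + (μ + 1 + b) - 1 - 2 * μ = a + b + 1 by omega,
        show μ + 1 + a - (μ + 1) = a by omega, show μ + 1 + b - (μ + 1) = b by omega,
        show μ + 1 + a - μ = a + 1 by omega, show μ + 1 + b - μ = b + 1 by omega]
      ring
  rw [Fin.sum_univ_eq_sum_range (f := fun j => d + m - 1 - 2 * j),
    ← hpeel _ (min_le_left d m) (min_le_right d m)]
  rcases le_total d m with h | h <;> simp [h]

theorem exists_strings_span_eq_span_rectangle [CharZero k] {gr : ℕ → Submodule k T}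
    (hind : iSupIndep gr) {s : ℕ} (hx : x ^ d • e = 0) (hy : y ^ m • e = 0)
    (hgr : ∀ i j, (x ^ i * y ^ j) • e ∈ gr (s + i + j))
    (hli : LinearIndepOn k (fun q : ℕ × ℕ => (x ^ q.1 * y ^ q.2) • e) (rectangle d m)) :
    ∃ g : Fin (min d m) → T,
      (∀ (j : Fin (min d m)) (i : ℕ), (x + y) ^ i • g j ∈ gr (s + j + i)) ∧
      (∀ j : Fin (min d m), (x + y) ^ (d + m - 1 - 2 * (j : ℕ)) • g j = 0) ∧
      Submodule.span k (Set.range fun q : Σ j : Fin (min d m), Fin (d + m - 1 - 2 * (j : ℕ)) =>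
          (x + y) ^ (q.2 : ℕ) • g q.1)
        = Submodule.span k ((fun q : ℕ × ℕ => (x ^ q.1 * y ^ q.2) • e) '' rectangle d m) := by
  have hlt (j : Fin (min d m)) : (j : ℕ) < d ∧ (j : ℕ) < m := lt_min_iff.mp j.2
  choose φ hφ hzero hne using fun j : Fin (min d m) =>
    exists_isHomogeneous_add_pow_smul hx hy hli (hlt j).1 (hlt j).2
  have hpow (j : Fin (min d m)) (i : ℕ) {W : Submodule k T}
      (hW : ∀ a b, a + b = i + j → (x ^ a * y ^ b) • e ∈ W) :
      (x + y) ^ i • aeval ![x, y] (φ j) • e ∈ W := by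
    have := aeval_smul_mem_of_isHomogeneous
      ((((isHomogeneous_X k 0).add (isHomogeneous_X k 1)).pow i).mul (hφ j)) (by simpa using hW)
    simpa [mul_smul] using this
  have hmem (j : Fin (min d m)) (i : ℕ) : (x + y) ^ i • aeval ![x, y] (φ j) • e ∈ gr (s + j + i) :=
    hpow j i fun a b hab => by
      rw [show s + j + i = s + a + b by omega]
      exact hgr a b
  refine ⟨fun j => aeval ![x, y] (φ j) • e, hmem, hzero, ?_⟩
  have hdegree_inj : Function.Injective
      fun j : Fin (min d m) => s + j + (d + m - 1 - 2 * (j : ℕ) - 1) := fun j j' h => by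
    have := hlt j
    have := hlt j'
    simp only at h
    exact Fin.ext (by omega)
  have hli_strings := linearIndependent_pow_smul_of_last (k := k) hzero <|
    (hind.comp hdegree_inj).linearIndependent _ (fun j => hmem j _) hne
  have : FiniteDimensional k
      (Submodule.span k ((fun q : ℕ × ℕ => (x ^ q.1 * y ^ q.2) • e) '' rectangle d m)) :=
    FiniteDimensional.span_of_finite k ((rectangle d m).finite_toSet.image _)
  refine Submodule.eq_of_le_of_finrank_eq (Submodule.span_le.mpr ?_) ?_
  · rintro _ ⟨⟨j, i⟩, rfl⟩
    refine hpow j i fun a b _ => ?_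
    by_cases hab : (a, b) ∈ rectangle d m
    · exact Submodule.subset_span ⟨(a, b), hab, rfl⟩
    · rw [pow_mul_pow_smul_eq_zero (q := (a, b)) hx hy hab]
      exact zero_mem _
  · rw [finrank_span_eq_card hli_strings, Set.image_eq_range, finrank_span_eq_card hli]
    simp [rectangle, sum_rectangle_string_lengths]

/-- The degrees in which the strings of `⨁ α, k[x, y]/(x ^ dv α, y ^ m)` under `x + y` start. By
Clebsch–Gordan, the rectangle of `α` is a sum of `min (dv α) m` strings. -/
def rectStart {Λ : Type*} (iv dv : Λ → ℕ) (m : ℕ) (q : Σ α, Fin (min (dv α) m)) : ℕ :=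
  iv q.1 + q.2

/-- The lengths of the strings of `⨁ α, k[x, y]/(x ^ dv α, y ^ m)` under `x + y`. The truncated
subtraction is harmless since `q.2` is less than both `dv q.1` and `m`. -/
def rectLength {Λ : Type*} (dv : Λ → ℕ) (m : ℕ) (q : Σ α, Fin (min (dv α) m)) : ℕ :=
  dv q.1 + m - 1 - 2 * q.2

theorem IsRectDecomp.exists_isDecomp_add [CharZero k] {gr : ℕ → Submodule k T}
    (hind : iSupIndep gr) {Λ : Type*} [Finite Λ] {iv dv : Λ → ℕ} {e : Λ → T}
    (h : IsRectDecomp gr x y iv dv m e) :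
    ∃ g, IsDecomp gr (x + y) (rectStart iv dv m) (rectLength dv m) g := by
  have := Fintype.ofFinite Λ
  have hblock (α : Λ) : LinearIndepOn k (fun q : ℕ × ℕ => (x ^ q.1 * y ^ q.2) • e α)
      (rectangle (dv α) m) :=
    h.linearIndependent.comp (Sigma.mk α) sigma_mk_injective
  choose g hmem hzero hspan using fun α => exists_strings_span_eq_span_rectangle hind
    (h.pow_smul_left α) (h.pow_smul_right α) (h.mem α) (hblock α)
  have htop : Submodule.span k (Set.range
      fun q : Σ p : (Σ α, Fin (min (dv α) m)), Fin (rectLength dv m p) =>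
        (x + y) ^ (q.2 : ℕ) • g q.1.1 q.1.2) = ⊤ := by
    rw [eq_top_iff, ← h.span_eq_top, Submodule.span_le]
    rintro _ ⟨⟨α, q⟩, rfl⟩
    refine Submodule.span_mono ?_ <| (hspan α).ge (Submodule.subset_span ⟨q.1, q.2, rfl⟩)
    rintro _ ⟨⟨j, i⟩, rfl⟩
    exact ⟨⟨⟨α, j⟩, i⟩, rfl⟩
  refine ⟨fun q => g q.1 q.2, fun q => ?_, fun q i _ => hmem q.1 q.2 i, fun q => hzero q.1 q.2,
    linearIndependent_of_top_le_span_of_card_eq_finrank htop.ge ?_, htop⟩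
  · have := lt_min_iff.mp q.2.2
    rw [rectLength]
    omega
  · rw [Module.finrank_eq_card_basis (Module.Basis.mk h.linearIndependent h.span_eq_top.ge)]
    simp only [Fintype.card_sigma, Fintype.sum_sigma, Fintype.card_fin, Fintype.card_coe]
    simp only [rectangle, Finset.card_product, Finset.card_range, rectLength,
      sum_rectangle_string_lengths]

end Rectangles

section PolynomialFamilies

/-- The polynomial families `k → E`, i.e. the linear combinations of the maps `t ↦ t ^ i • c`. -/
def polynomialFamily (k E : Type*) [Field k] [AddCommGroup E] [Module k E] : Submodule k (k → E) :=
  Submodule.span k (Set.range fun (q : ℕ × E) (t : k) => t ^ q.1 • q.2)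

namespace polynomialFamily

variable {k E F G : Type*} [Field k] [AddCommGroup E] [Module k E] [AddCommGroup F] [Module k F]
  [AddCommGroup G] [Module k G]

theorem pow_smul_const_mem (i : ℕ) (c : E) : (fun t => t ^ i • c) ∈ polynomialFamily k E :=
  Submodule.subset_span ⟨(i, c), rfl⟩

theorem const_mem (c : E) : (fun _ => c) ∈ polynomialFamily k E := by
  simpa using pow_smul_const_mem (k := k) 0 c

theorem add_smul_mem (a b : E) : (fun t => a + t • b) ∈ polynomialFamily k E :=
  add_mem (const_mem a) (by simpa using pow_smul_const_mem (k := k) 1 b)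

theorem map_mem (φ : E →ₗ[k] F) {f : k → E} (hf : f ∈ polynomialFamily k E) :
    (fun t => φ (f t)) ∈ polynomialFamily k F := by
  have hle : polynomialFamily k E ≤ (polynomialFamily k F).comap (φ.compLeft k) := by
    refine Submodule.span_le.mpr ?_
    rintro _ ⟨⟨i, c⟩, rfl⟩
    change (fun t => φ (t ^ i • c)) ∈ polynomialFamily k F
    simpa only [map_smul] using pow_smul_const_mem i (φ c)
  exact hle hf

theorem pow_smul_mem (i : ℕ) {f : k → E} (hf : f ∈ polynomialFamily k E) :
    (fun t => t ^ i • f t) ∈ polynomialFamily k E := by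
  have hle : polynomialFamily k E ≤
      (polynomialFamily k E).comap (LinearMap.pi fun t => t ^ i • LinearMap.proj t) := by
    refine Submodule.span_le.mpr ?_
    rintro _ ⟨⟨j, c⟩, rfl⟩
    change (fun t => t ^ i • t ^ j • c) ∈ polynomialFamily k E
    simpa only [smul_smul, ← pow_add] using pow_smul_const_mem (i + j) c
  exact hle hf

theorem map₂_mem (B : E →ₗ[k] F →ₗ[k] G) {f : k → E} {g : k → F}
    (hf : f ∈ polynomialFamily k E) (hg : g ∈ polynomialFamily k F) :
    (fun t => B (f t) (g t)) ∈ polynomialFamily k G := by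
  have hle : polynomialFamily k E ≤
      (polynomialFamily k G).comap (LinearMap.pi fun t => B.flip (g t) ∘ₗ LinearMap.proj t) := by
    refine Submodule.span_le.mpr ?_
    rintro _ ⟨⟨i, c⟩, rfl⟩
    change (fun t => B (t ^ i • c) (g t)) ∈ polynomialFamily k G
    simpa only [map_smul, LinearMap.smul_apply] using pow_smul_mem i (map_mem (B c) hg)
  exact hle hf

theorem smul_mem {f : k → k} {g : k → E} (hf : f ∈ polynomialFamily k k)
    (hg : g ∈ polynomialFamily k E) : (fun t => f t • g t) ∈ polynomialFamily k E :=
  map₂_mem (LinearMap.lsmul k E) hf hg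

theorem pow_mem {A : Type*} [Ring A] [Algebra k A] {f : k → A} (hf : f ∈ polynomialFamily k A)
    (n : ℕ) : (fun t => f t ^ n) ∈ polynomialFamily k A := by
  induction n with
  | zero => simpa using const_mem (1 : A)
  | succ n ih => simpa [pow_succ] using map₂_mem (LinearMap.mul k A) ih hf

theorem pi_mem {ι : Type*} [Finite ι] {f : k → ι → E}
    (hf : ∀ i, (fun t => f t i) ∈ polynomialFamily k E) : f ∈ polynomialFamily k (ι → E) := by
  classical
  have := Fintype.ofFinite ι
  have hsum : f = ∑ i, fun t => LinearMap.single k (fun _ => E) i (f t i) := by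
    ext t : 1
    rw [Finset.sum_apply]
    exact (Finset.univ_sum_single (f t)).symm
  rw [hsum]
  exact sum_mem fun i _ => map_mem _ (hf i)

theorem mem_iff_exists_eval {f : k → k} :
    f ∈ polynomialFamily k k ↔ ∃ P : Polynomial k, ∀ t, f t = P.eval t := by
  constructor
  · intro hf
    have hle : polynomialFamily k k ≤
        LinearMap.range (LinearMap.pi fun t => Polynomial.leval (R := k) t) := by
      refine Submodule.span_le.mpr ?_
      rintro _ ⟨⟨i, c⟩, rfl⟩
      exact ⟨Polynomial.monomial i c, by ext t; simp [mul_comm]⟩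
    obtain ⟨P, rfl⟩ := hle hf
    exact ⟨P, fun t => rfl⟩
  · rintro ⟨P, hP⟩
    have hsum : f = ∑ i ∈ Finset.range (P.natDegree + 1), fun t => t ^ i • P.coeff i := by
      ext t
      simp [hP, Polynomial.eval_eq_sum_range, mul_comm]
    rw [hsum]
    exact sum_mem fun i _ => pow_smul_const_mem i (P.coeff i)

section Matrix

variable {ι : Type*} [Fintype ι] [DecidableEq ι] {f : k → Matrix ι ι k}

theorem mem_matrix_iff_exists_eval :
    f ∈ polynomialFamily k (Matrix ι ι k) ↔
      ∃ R : Matrix ι ι (Polynomial k), ∀ t, f t = (Polynomial.evalRingHom t).mapMatrix R := by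
  constructor
  · intro hf
    choose R hR using fun i j =>
      mem_iff_exists_eval.mp (map_mem (Matrix.entryLinearMap k k i j) hf)
    exact ⟨Matrix.of R, fun t => Matrix.ext fun i j => hR i j t⟩
  · rintro ⟨R, hR⟩
    exact pi_mem fun i => pi_mem fun j =>
      mem_iff_exists_eval.mpr ⟨R i j, fun t => congrFun₂ (hR t) i j⟩

theorem matrix_det_mem (hf : f ∈ polynomialFamily k (Matrix ι ι k)) :
    (fun t => (f t).det) ∈ polynomialFamily k k := by
  obtain ⟨R, hR⟩ := mem_matrix_iff_exists_eval.mp hf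
  exact mem_iff_exists_eval.mpr ⟨R.det, fun t => by rw [hR, ← RingHom.map_det]; rfl⟩

theorem matrix_adjugate_mem (hf : f ∈ polynomialFamily k (Matrix ι ι k)) :
    (fun t => (f t).adjugate) ∈ polynomialFamily k (Matrix ι ι k) := by
  obtain ⟨R, hR⟩ := mem_matrix_iff_exists_eval.mp hf
  exact mem_matrix_iff_exists_eval.mpr ⟨R.adjugate, fun t => by rw [hR, RingHom.map_adjugate]⟩

end Matrix

section Endomorphism

variable [FiniteDimensional k E] {f : k → Module.End k E}

theorem det_mem (hf : f ∈ polynomialFamily k (Module.End k E)) :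
    (fun t => LinearMap.det (f t)) ∈ polynomialFamily k k := by
  simp only [← LinearMap.det_toMatrix (Module.finBasis k E)]
  exact matrix_det_mem (map_mem (LinearMap.toMatrix _ _).toLinearMap hf)

theorem exists_mul_eq_det_smul_one (hf : f ∈ polynomialFamily k (Module.End k E)) :
    ∃ g ∈ polynomialFamily k (Module.End k E), ∀ t, f t * g t = LinearMap.det (f t) • 1 := by
  let L := LinearMap.toMatrixAlgEquiv (Module.finBasis k E)
  refine ⟨fun t => L.symm (L (f t)).adjugate,
    map_mem L.symm.toLinearMap (matrix_adjugate_mem (map_mem L.toLinearMap hf)), fun t => ?_⟩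
  apply L.injective
  rw [map_mul, L.apply_symm_apply, Matrix.mul_adjugate, map_smul, map_one,
    ← LinearMap.det_toMatrix (Module.finBasis k E)]
  rfl

end Endomorphism

theorem restrict_mem {φ : k → E →ₗ[k] F} (hφ : φ ∈ polynomialFamily k (E →ₗ[k] F))
    {U : Submodule k E} {W : Submodule k F} (hUW : ∀ t, ∀ x ∈ U, φ t x ∈ W) :
    (fun t => (φ t).restrict (hUW t)) ∈ polynomialFamily k (U →ₗ[k] W) := by
  obtain ⟨π, hπ⟩ := LinearMap.exists_leftInverse_of_injective W.subtype W.ker_subtype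
  have hrestrict (t : k) : (φ t).restrict (hUW t) = π ∘ₗ φ t ∘ₗ U.subtype :=
    LinearMap.ext fun x => (LinearMap.congr_fun hπ ((φ t).restrict (hUW t) x)).symm
  simp only [hrestrict]
  exact map_mem (LinearMap.llcomp k U F W π ∘ₗ LinearMap.lcomp k F U.subtype) hφ

theorem eventually_ne_zero {f : k → k} (hf : f ∈ polynomialFamily k k) {t₀ : k} (h₀ : f t₀ ≠ 0) :
    ∀ᶠ t in Filter.cofinite, f t ≠ 0 := by
  obtain ⟨P, hP⟩ := mem_iff_exists_eval.mp hf
  have hP0 : P ≠ 0 := by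
    rintro rfl
    simp [hP] at h₀
  filter_upwards [(Polynomial.finite_setOfPred_isRoot hP0).eventually_cofinite_notMem] with t ht
  rwa [hP]

theorem eventually_bijective [FiniteDimensional k E] {f : k → Module.End k E}
    (hf : f ∈ polynomialFamily k (Module.End k E)) {t₀ : k} (h₀ : Function.Bijective (f t₀)) :
    ∀ᶠ t in Filter.cofinite, Function.Bijective (f t) := by
  simp only [← Module.End.isUnit_iff, LinearMap.isUnit_iff_isUnit_det, isUnit_iff_ne_zero] at h₀ ⊢
  exact eventually_ne_zero (det_mem hf) h₀

theorem eventually_injective [FiniteDimensional k E] {φ : k → E →ₗ[k] F}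
    (hφ : φ ∈ polynomialFamily k (E →ₗ[k] F)) {t₀ : k} (h₀ : Function.Injective (φ t₀)) :
    ∀ᶠ t in Filter.cofinite, Function.Injective (φ t) := by
  obtain ⟨g, hg⟩ := LinearMap.exists_leftInverse_of_injective _ (LinearMap.ker_eq_bot.mpr h₀)
  have hgφ : (fun t => g ∘ₗ φ t) ∈ polynomialFamily k (Module.End k E) :=
    map_mem (LinearMap.llcomp k E F E g) hφ
  filter_upwards [eventually_bijective hgφ (t₀ := t₀) (by simp [hg, Function.bijective_id])]
    with t ht
  exact Function.Injective.of_comp (f := g) ht.injective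

theorem eventually_surjective [FiniteDimensional k F] {φ : k → E →ₗ[k] F}
    (hφ : φ ∈ polynomialFamily k (E →ₗ[k] F)) {t₀ : k} (h₀ : Function.Surjective (φ t₀)) :
    ∀ᶠ t in Filter.cofinite, Function.Surjective (φ t) := by
  obtain ⟨g, hg⟩ := LinearMap.exists_rightInverse_of_surjective _ (LinearMap.range_eq_top.mpr h₀)
  have hφg : (fun t => φ t ∘ₗ g) ∈ polynomialFamily k (Module.End k F) :=
    map_mem (LinearMap.lcomp k F g) hφ
  filter_upwards [eventually_bijective hφg (t₀ := t₀) (by simp [hg, Function.bijective_id])]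
    with t ht
  exact Function.Surjective.of_comp (g := g) ht.surjective

theorem exists_kernel_family [FiniteDimensional k F] {φ : k → E →ₗ[k] F}
    (hφ : φ ∈ polynomialFamily k (E →ₗ[k] F)) {t₀ : k} (h₀ : Function.Surjective (φ t₀)) {e : E}
    (he : φ t₀ e = 0) :
    ∃ f ∈ polynomialFamily k E, f t₀ = e ∧ ∀ t, φ t (f t) = 0 := by
  obtain ⟨g, hg⟩ := LinearMap.exists_rightInverse_of_surjective _ (LinearMap.range_eq_top.mpr h₀)
  have hφg : (fun t => φ t ∘ₗ g) ∈ polynomialFamily k (Module.End k F) :=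
    map_mem (LinearMap.lcomp k F g) hφ
  obtain ⟨Q, hQ, hmul⟩ := exists_mul_eq_det_smul_one hφg
  -- Cramer's rule for `φ t (g v) = φ t e`, with the denominator cleared.
  refine ⟨fun t => LinearMap.det (φ t ∘ₗ g) • e - g (Q t (φ t e)), ?_, ?_, fun t => ?_⟩
  · exact sub_mem (smul_mem (det_mem hφg) (const_mem e)) <| map_mem g <|
      map₂_mem LinearMap.id hQ (map_mem (LinearMap.applyₗ e) hφ)
  · simp [hg, he]
  · have := LinearMap.congr_fun (hmul t) (φ t e)
    rw [map_sub, map_smul, sub_eq_zero]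
    exact this.symm

theorem eventually_linearIndependent_and_span_eq_top [FiniteDimensional k E] {ι : Type*} [Finite ι]
    {v : ι → k → E} (hv : ∀ i, v i ∈ polynomialFamily k E) {t₀ : k}
    (hli : LinearIndependent k fun i => v i t₀)
    (hspan : Submodule.span k (Set.range fun i => v i t₀) = ⊤) :
    ∀ᶠ t in Filter.cofinite, LinearIndependent k (fun i => v i t) ∧
      Submodule.span k (Set.range fun i => v i t) = ⊤ := by
  have := Fintype.ofFinite ι
  have hφ : (fun t => Fintype.linearCombination k fun i => v i t) ∈
      polynomialFamily k ((ι → k) →ₗ[k] E) :=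
    map_mem (Fintype.bilinearCombination k k) (pi_mem hv)
  simp only [linearIndependent_iff_injective_fintypeLinearCombination,
    ← Fintype.range_linearCombination, LinearMap.range_eq_top] at hli hspan ⊢
  exact (eventually_injective hφ hli).and (eventually_surjective hφ hspan)

end polynomialFamily

end PolynomialFamilies

section Deformations

variable {k A T : Type*} [Field k] [CommRing A] [AddCommGroup T] [Module k T] [Module A T]
  {gr : ℕ → Submodule k T}

/-- Multiplication by `z` is homogeneous of degree one. -/
def RaisesDegree (gr : ℕ → Submodule k T) (z : A) : Prop :=
  ∀ i, ∀ x ∈ gr i, z • x ∈ gr (i + 1)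

theorem RaisesDegree.pow_smul_mem {z : A} (hz : RaisesDegree gr z) (a : ℕ) {d : ℕ} {x : T}
    (hx : x ∈ gr d) : z ^ a • x ∈ gr (d + a) := by
  induction a with
  | zero => simpa using hx
  | succ a ih =>
    rw [pow_succ', mul_smul]
    exact hz _ _ ih

variable [Algebra k A] [IsScalarTower k A T]

/-- Multiplication by `z ^ a` as a map from the component of degree `d` to that of degree
`d + a`. -/
def RaisesDegree.powMap {z : A} (hz : RaisesDegree gr z) (a d : ℕ) : gr d →ₗ[k] gr (d + a) :=
  (Algebra.lsmul k k T (z ^ a)).restrict fun _ hx => hz.pow_smul_mem a hx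

theorem RaisesDegree.coe_powMap_apply {z : A} (hz : RaisesDegree gr z) (a d : ℕ) (x : gr d) :
    (hz.powMap a d x : T) = z ^ a • (x : T) :=
  rfl

theorem RaisesDegree.isSLAction_iff {z : A} (hz : RaisesDegree gr z) :
    IsSLAction gr z ↔ ∀ a d, Function.Injective (hz.powMap a d) ∨
      Function.Surjective (hz.powMap a d) := by
  refine forall₂_congr fun a d => or_congr ?_ ?_
  · rw [injective_iff_map_eq_zero, Subtype.forall]
    exact forall₂_congr fun x hx => by simp [Subtype.ext_iff, coe_powMap_apply]
  · rw [Function.Surjective, Subtype.forall]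
    exact forall₂_congr fun w hw => by simp [Subtype.ext_iff, coe_powMap_apply]

variable {z : k → A}

theorem RaisesDegree.powMap_mem_polynomialFamily (hz_poly : z ∈ polynomialFamily k A)
    (hz : ∀ t, RaisesDegree gr (z t)) (a d : ℕ) :
    (fun t => (hz t).powMap a d) ∈ polynomialFamily k (gr d →ₗ[k] gr (d + a)) :=
  polynomialFamily.restrict_mem (φ := fun t => Algebra.lsmul k k T (z t ^ a))
    (polynomialFamily.map_mem (Algebra.lsmul k k T).toLinearMap
      (polynomialFamily.pow_mem hz_poly a)) _

variable [FiniteDimensional k T]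

theorem finite_setOf_ne_bot_pairs (hind : iSupIndep gr) :
    {q : ℕ × ℕ | gr q.2 ≠ ⊥ ∧ gr (q.2 + q.1) ≠ ⊥}.Finite := by
  have hfin := WellFoundedGT.finite_ne_bot_of_iSupIndep hind
  refine (hfin.prod hfin).preimage (f := fun q : ℕ × ℕ => (q.2, q.2 + q.1)) ?_
  rintro ⟨a, d⟩ - ⟨a', d'⟩ - h
  simp only [Prod.mk.injEq] at h ⊢
  omega

theorem eventually_isSLAction (hind : iSupIndep gr) (hz_poly : z ∈ polynomialFamily k A)
    (hz : ∀ t, RaisesDegree gr (z t)) {t₀ : k} (h₀ : IsSLAction gr (z t₀)) :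
    ∀ᶠ t in Filter.cofinite, IsSLAction gr (z t) := by
  have hpair (q : ℕ × ℕ) : ∀ᶠ t in Filter.cofinite, Function.Injective ((hz t).powMap q.1 q.2) ∨
      Function.Surjective ((hz t).powMap q.1 q.2) := by
    have hpoly := RaisesDegree.powMap_mem_polynomialFamily hz_poly hz q.1 q.2
    rcases (hz t₀).isSLAction_iff.mp h₀ q.1 q.2 with h | h
    · exact (polynomialFamily.eventually_injective hpoly h).mono fun _ => Or.inl
    · exact (polynomialFamily.eventually_surjective hpoly h).mono fun _ => Or.inr
  filter_upwards [(Filter.eventually_all_finite (finite_setOf_ne_bot_pairs hind)).mpr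
    fun q _ => hpair q] with t ht
  refine (hz t).isSLAction_iff.mpr fun a d => ?_
  by_cases hd : gr d = ⊥
  · have : Subsingleton (gr d) := Submodule.subsingleton_iff_eq_bot.mpr hd
    exact Or.inl (Function.injective_of_subsingleton _)
  by_cases hda : gr (d + a) = ⊥
  · have : Subsingleton (gr (d + a)) := Submodule.subsingleton_iff_eq_bot.mpr hda
    exact Or.inr (Function.surjective_to_subsingleton _)
  exact ht (a, d) ⟨hd, hda⟩

theorem exists_annihilated_family (hz_poly : z ∈ polynomialFamily k A)
    (hz : ∀ t, RaisesDegree gr (z t)) {t₀ : k} (h₀ : IsSLAction gr (z t₀)) {d i : ℕ} {x : T}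
    (hx : x ∈ gr i) (hx0 : x ≠ 0) (hzx : z t₀ ^ d • x = 0) :
    ∃ f ∈ polynomialFamily k T, f t₀ = x ∧ (∀ t, f t ∈ gr i) ∧ ∀ t, z t ^ d • f t = 0 := by
  have hsurj : Function.Surjective ((hz t₀).powMap d i) := by
    refine ((hz t₀).isSLAction_iff.mp h₀ d i).resolve_left fun hinj => hx0 ?_
    exact congrArg Subtype.val
      (hinj (a₁ := ⟨x, hx⟩) (a₂ := 0) ((Subtype.ext hzx).trans (map_zero _).symm))
  obtain ⟨f, hf, hf₀, hzf⟩ := polynomialFamily.exists_kernel_family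
    (RaisesDegree.powMap_mem_polynomialFamily hz_poly hz d i) hsurj (e := ⟨x, hx⟩)
    (Subtype.ext hzx)
  exact ⟨fun t => f t, polynomialFamily.map_mem (gr i).subtype hf, congrArg Subtype.val hf₀,
    fun t => (f t).2, fun t => congrArg Subtype.val (hzf t)⟩

theorem eventually_exists_isDecomp (hz_poly : z ∈ polynomialFamily k A)
    (hz : ∀ t, RaisesDegree gr (z t)) {t₀ : k} (h₀ : IsSLAction gr (z t₀)) {Λ : Type*} [Finite Λ]
    {iv dv : Λ → ℕ} {e : Λ → T} (hdec : IsDecomp gr (z t₀) iv dv e) :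
    ∀ᶠ t in Filter.cofinite, ∃ e', IsDecomp gr (z t) iv dv e' := by
  have hmem (α : Λ) : e α ∈ gr (iv α) := by simpa using hdec.2.1 α 0 (hdec.1 α)
  have hne (α : Λ) : e α ≠ 0 := by
    simpa using hdec.2.2.2.1.ne_zero ⟨α, ⟨0, hdec.1 α⟩⟩
  choose f hf hf₀ hfmem hfzero using fun α =>
    exists_annihilated_family hz_poly hz h₀ (hmem α) (hne α) (hdec.2.2.1 α)
  have hstring (q : Σ α, Fin (dv α)) :
      (fun t => z t ^ (q.2 : ℕ) • f q.1 t) ∈ polynomialFamily k T :=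
    polynomialFamily.map₂_mem (Algebra.lsmul k k T).toLinearMap
      (polynomialFamily.pow_mem hz_poly _) (hf q.1)
  filter_upwards [polynomialFamily.eventually_linearIndependent_and_span_eq_top hstring (t₀ := t₀)
    (by simpa only [hf₀] using hdec.2.2.2.1) (by simpa only [hf₀] using hdec.2.2.2.2)] with t ht
  exact ⟨fun α => f α t, hdec.1, fun α j _ => (hz t).pow_smul_mem j (hfmem α t),
    fun α => hfzero α t, ht⟩

end Deformations

section TruncatedExtension

theorem iSupIndep_of_forall_le_comap {k T M J : Type*} [Field k] [AddCommGroup T] [Module k T]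
    [AddCommGroup M] [Module k M] {ι : Type*} {U : ι → Submodule k T} {V : J → ι → Submodule k M}
    {φ : J → T →ₗ[k] M} (hφ : ∀ t, (∀ j, φ j t = 0) → t = 0) (hV : ∀ j, iSupIndep (V j))
    (hUV : ∀ i j, U i ≤ (V j i).comap (φ j)) : iSupIndep U := by
  refine fun i => Submodule.disjoint_def.mpr fun t ht ht' => hφ t fun j => ?_
  refine Submodule.disjoint_def.mp (hV j i) _ (hUV i j ht) ?_
  have hle : ⨆ i', ⨆ _ : i' ≠ i, U i' ≤ (⨆ i', ⨆ _ : i' ≠ i, V j i').comap (φ j) :=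
    iSup₂_le fun i' hi' =>
      (hUV i' j).trans (Submodule.comap_mono (le_iSup₂ (f := fun i' _ => V j i') i' hi'))
  exact hle ht'

theorem iSupIndep_shift {L : Type*} [CompleteLattice L] {gr : ℕ → L} (hind : iSupIndep gr)
    (j : ℕ) : iSupIndep fun D => if j ≤ D then gr (D - j) else ⊥ := by
  intro D
  by_cases hD : j ≤ D
  · simp only [if_pos hD]
    refine (hind (D - j)).mono_right (iSup₂_le fun i hi => ?_)
    split_ifs with hij
    · exact le_iSup₂_of_le (i - j) (by omega) le_rfl
    · exact bot_le
  · simp only [if_neg hD, disjoint_bot_left]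

variable {k : Type*} [Field k] {n : ℕ} {M : Type*} [AddCommGroup M]
  [Module (MvPolynomial (Fin n) k) M] {m : ℕ}

theorem X_pow_smul_truncExt (t : TruncExt k n M m) :
    (Polynomial.X : Polynomial (MvPolynomial (Fin n) k)) ^ m • t = 0 := by
  obtain ⟨p, rfl⟩ := Submodule.Quotient.mk_surjective _ t
  rw [← Submodule.Quotient.mk_smul, Submodule.Quotient.mk_eq_zero]
  exact Submodule.smul_mem_smul (Ideal.mem_span_singleton_self _) trivial

variable [Module k M] [IsScalarTower k (MvPolynomial (Fin n) k) M]

/-- The map `x ↦ x · y ^ j` from `M` to `M ⊗ k[y]/(y ^ m)`. -/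
noncomputable def truncMonomial (m j : ℕ) : M →ₗ[k] TruncExt k n M m where
  toFun x := Submodule.Quotient.mk (PolynomialModule.single (MvPolynomial (Fin n) k) j x)
  map_add' x y := by rw [PolynomialModule.single_add, Submodule.Quotient.mk_add]
  map_smul' c x := by
    rw [RingHom.id_apply, ← Submodule.Quotient.mk_smul]
    exact congrArg Submodule.Quotient.mk
      (PolynomialModule.ext (Finsupp.smul_single c j x).symm)

theorem monomial_smul_truncMonomial (i j : ℕ) (r : MvPolynomial (Fin n) k) (x : M) :
    Polynomial.monomial i r • (truncMonomial m j x : TruncExt k n M m)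
      = truncMonomial m (i + j) (r • x) :=
  congrArg Submodule.Quotient.mk (PolynomialModule.monomial_smul_single i r j x)

theorem pow_mul_pow_smul_truncMonomial (r : MvPolynomial (Fin n) k) (c : k) (i j : ℕ) (x : M) :
    (Polynomial.C r ^ i * (Polynomial.C (C c) * Polynomial.X) ^ j) •
        (truncMonomial m 0 x : TruncExt k n M m)
      = truncMonomial m j (c ^ j • r ^ i • x) := by
  have hmonomial : Polynomial.C r ^ i * (Polynomial.C (C c) * Polynomial.X) ^ j
      = Polynomial.monomial j (C (c ^ j) * r ^ i) := by
    rw [← Polynomial.C_mul_X_pow_eq_monomial, mul_pow, Polynomial.C_mul, C_pow, Polynomial.C_pow,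
      Polynomial.C_pow]
    ring
  rw [hmonomial, monomial_smul_truncMonomial, mul_smul, ← algebraMap_eq, algebraMap_smul, add_zero]

theorem truncMonomial_eq_zero {j : ℕ} (hj : m ≤ j) (x : M) :
    (truncMonomial m j x : TruncExt k n M m) = 0 := by
  have hmonomial := monomial_smul_truncMonomial (k := k) (n := n) (m := m) m (j - m) 1 x
  rw [one_smul, Nat.add_sub_cancel' hj] at hmonomial
  rw [← hmonomial, ← Polynomial.X_pow_eq_monomial]
  exact X_pow_smul_truncExt _

theorem truncExt_linearMap_ext {E : Type*} [AddCommGroup E] [Module k E]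
    {φ ψ : TruncExt k n M m →ₗ[k] E}
    (h : ∀ j, φ ∘ₗ truncMonomial m j = ψ ∘ₗ truncMonomial m j) : φ = ψ := by
  refine LinearMap.ext fun t => ?_
  obtain ⟨p, rfl⟩ := Submodule.Quotient.mk_surjective _ t
  induction p using PolynomialModule.induction_linear with
  | zero => rw [Submodule.Quotient.mk_zero, map_zero, map_zero]
  | add p q hp hq => rw [Submodule.Quotient.mk_add, map_add, map_add, hp, hq]
  | single j x => exact LinearMap.congr_fun (h j) x

/-- The coefficient of `y ^ j` of an element of `M ⊗ k[y]/(y ^ m)`, for `j < m`. -/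
noncomputable def truncCoeff (j : Fin m) : TruncExt k n M m →ₗ[k] M :=
  Submodule.liftQ
    ((Ideal.span {(Polynomial.X : Polynomial (MvPolynomial (Fin n) k)) ^ m} •
      (⊤ : Submodule (Polynomial (MvPolynomial (Fin n) k))
        (PolynomialModule (MvPolynomial (Fin n) k) M))).restrictScalars k)
    { toFun := fun p => p.coeff j
      map_add' := fun p q => by simp
      map_smul' := fun _ _ => rfl }
    (by
      intro p hp
      rw [Submodule.restrictScalars_mem, Submodule.ideal_span_singleton_smul] at hp
      obtain ⟨q, -, rfl⟩ := hp
      change ((Polynomial.X : Polynomial (MvPolynomial (Fin n) k)) ^ m • q).coeff j = 0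
      rw [Polynomial.X_pow_eq_monomial, PolynomialModule.monomial_smul_apply,
        if_neg (not_le.mpr j.2)]) ∘ₗ
    (Submodule.Quotient.restrictScalarsEquiv k _).symm.toLinearMap

theorem truncCoeff_truncMonomial (j : Fin m) (i : ℕ) (x : M) :
    truncCoeff j (truncMonomial m i x : TruncExt k n M m) = if i = j then x else 0 := by
  change (PolynomialModule.single (MvPolynomial (Fin n) k) i x).coeff j = _
  rw [PolynomialModule.coeff_single, Finsupp.single_apply]

/-- `M ⊗ k[y]/(y ^ m)` as a power of `M`, through the coefficients of `1, y, …, y ^ (m - 1)`. -/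
noncomputable def truncExtEquiv (k : Type*) [Field k] (n : ℕ) (M : Type*) [AddCommGroup M]
    [Module k M] [Module (MvPolynomial (Fin n) k) M] [IsScalarTower k (MvPolynomial (Fin n) k) M]
    (m : ℕ) : TruncExt k n M m ≃ₗ[k] (Fin m → M) :=
  LinearEquiv.ofLinearMap (LinearMap.pi truncCoeff)
    (∑ j : Fin m, truncMonomial m j ∘ₗ LinearMap.proj j)
    (by
      refine LinearMap.ext fun f => funext fun j => ?_
      simp [truncCoeff_truncMonomial, Fin.val_inj])
    (by
      refine truncExt_linearMap_ext fun i => LinearMap.ext fun x => ?_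
      simp only [LinearMap.comp_apply, LinearMap.sum_apply, LinearMap.proj_apply,
        LinearMap.pi_apply, truncCoeff_truncMonomial, LinearMap.id_apply, apply_ite, map_zero]
      by_cases hi : i < m
      · rw [Finset.sum_eq_single ⟨i, hi⟩ (fun j _ hj => if_neg fun h => hj (Fin.ext h.symm))
          (fun h => (h (Finset.mem_univ _)).elim), if_pos rfl]
      · rw [truncMonomial_eq_zero (not_lt.mp hi)]
        exact Finset.sum_eq_zero fun j _ => if_neg (by omega))

theorem truncExtEquiv_symm_single (j : Fin m) (x : M) :
    (truncExtEquiv k n M m).symm (Pi.single j x) = truncMonomial m j x := by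
  rw [LinearEquiv.symm_apply_eq]
  ext i
  change (Pi.single j x : Fin m → M) i = truncCoeff i (truncMonomial m j x : TruncExt k n M m)
  rw [truncCoeff_truncMonomial, Pi.single_apply]
  simp [Fin.ext_iff, eq_comm]

theorem finiteDimensional_truncExt [FiniteDimensional k M] :
    FiniteDimensional k (TruncExt k n M m) :=
  Module.Finite.equiv (truncExtEquiv k n M m).symm

variable {gr : ℕ → Submodule k M}

theorem truncMonomial_mem_truncGr {j D : ℕ} {x : M} (hj : j ≤ D) (hx : x ∈ gr (D - j)) :
    (truncMonomial m j x : TruncExt k n M m) ∈ truncGr n gr m D :=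
  Submodule.subset_span ⟨j, x, hj, hx, rfl⟩

theorem RaisesDegree.C_add_C_mul_X {r : MvPolynomial (Fin n) k} (hr : RaisesDegree gr r) (c : k) :
    RaisesDegree (truncGr n gr m)
      (Polynomial.C r + Polynomial.C (C c) * Polynomial.X) := by
  intro D
  suffices h : truncGr n gr m D ≤ (truncGr n gr m (D + 1)).comap (Algebra.lsmul k k _
      (Polynomial.C r + Polynomial.C (C c) * Polynomial.X)) from fun t ht => h ht
  refine Submodule.span_le.mpr ?_
  rintro _ ⟨j, x, hj, hx, rfl⟩
  change (Polynomial.C r + Polynomial.C (C c) * Polynomial.X) •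
    (truncMonomial m j x : TruncExt k n M m) ∈ truncGr n gr m (D + 1)
  rw [add_smul, ← Polynomial.monomial_zero_left, Polynomial.C_mul_X_eq_monomial,
    monomial_smul_truncMonomial, monomial_smul_truncMonomial, ← algebraMap_eq, algebraMap_smul]
  refine add_mem (truncMonomial_mem_truncGr (by omega) ?_)
    (truncMonomial_mem_truncGr (by omega) ?_)
  · rw [show D + 1 - (0 + j) = D - j + 1 by omega]
    exact hr _ _ hx
  · rw [show D + 1 - (1 + j) = D - j by omega]
    exact Submodule.smul_mem _ _ hx

theorem truncGr_le_comap_truncCoeff (D : ℕ) (j : Fin m) :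
    truncGr n gr m D ≤
      (if (j : ℕ) ≤ D then gr (D - j) else ⊥).comap (truncCoeff j : TruncExt k n M m →ₗ[k] M) := by
  refine Submodule.span_le.mpr ?_
  rintro _ ⟨i, x, hi, hx, rfl⟩
  change truncCoeff j (truncMonomial m i x : TruncExt k n M m) ∈
    if (j : ℕ) ≤ D then gr (D - j) else ⊥
  rw [truncCoeff_truncMonomial]
  by_cases hij : i = j
  · subst hij
    rwa [if_pos rfl, if_pos hi]
  · rw [if_neg hij]
    exact zero_mem _

theorem iSupIndep_truncGr (hind : iSupIndep gr) (m : ℕ) :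
    iSupIndep (truncGr n gr m : ℕ → Submodule k (TruncExt k n M m)) :=
  iSupIndep_of_forall_le_comap (φ := truncCoeff)
    (fun _ ht => (truncExtEquiv k n M m).map_eq_zero_iff.mp (funext ht))
    (fun j => iSupIndep_shift hind j) truncGr_le_comap_truncCoeff

theorem IsDecomp.isRectDecomp {r : MvPolynomial (Fin n) k} {Λ : Type*} {iv dv : Λ → ℕ} {e : Λ → M}
    (h : IsDecomp gr r iv dv e) {c : k} (hc : c ≠ 0) (m : ℕ) :
    IsRectDecomp (truncGr n gr m) (Polynomial.C r)
      (Polynomial.C (C c) * Polynomial.X) iv dv m (fun α => truncMonomial m 0 (e α)) := by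
  let b := Module.Basis.mk h.2.2.2.1 h.2.2.2.2.ge
  let B := ((Pi.basis fun _ : Fin m => b).unitsSMul fun q => Units.mk0 c hc ^ (q.1 : ℕ)).map
    (truncExtEquiv k n M m).symm
  let σ : (Σ _ : Fin m, Σ α, Fin (dv α)) ≃ Σ α, rectangle (dv α) m :=
    { toFun q := ⟨q.2.1, (q.2.2, q.1), mem_rectangle.mpr ⟨q.2.2.2, q.1.2⟩⟩
      invFun q :=
        ⟨⟨q.2.1.2, (mem_rectangle.mp q.2.2).2⟩, q.1, q.2.1.1, (mem_rectangle.mp q.2.2).1⟩ }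
  have hB : (B.reindex σ : (Σ α, rectangle (dv α) m) → TruncExt k n M m) = fun q =>
      (Polynomial.C r ^ q.2.1.1 * (Polynomial.C (C c) * Polynomial.X) ^ q.2.1.2) •
        truncMonomial m 0 (e q.1) := by
    ext q
    rw [pow_mul_pow_smul_truncMonomial, Module.Basis.reindex_apply, Module.Basis.map_apply,
      Module.Basis.unitsSMul_apply, Pi.basis_apply, Module.Basis.mk_apply, Units.smul_def,
      Units.val_pow_eq_pow_val, Units.val_mk0, map_smul, truncExtEquiv_symm_single, ← map_smul]
    rfl
  refine ⟨h.1, fun α => ?_, fun α => ?_, fun α i j => ?_, hB ▸ (B.reindex σ).linearIndependent,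
    hB ▸ (B.reindex σ).span_eq⟩
  · simpa [h.2.2.1 α] using
      pow_mul_pow_smul_truncMonomial (m := m) r c (dv α) 0 (e α)
  · rw [mul_pow, mul_smul, X_pow_smul_truncExt, smul_zero]
  · rw [pow_mul_pow_smul_truncMonomial]
    refine truncMonomial_mem_truncGr (by omega) (Submodule.smul_mem _ _ ?_)
    rw [Nat.add_sub_cancel]
    rcases lt_or_ge i (dv α) with hi | hi
    · exact h.2.1 α i hi
    · rw [h.pow_smul_eq_zero hi]
      exact zero_mem _

theorem IsDecomp.exists_isDecomp_truncGr [CharZero k] (hind : iSupIndep gr)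
    {r : MvPolynomial (Fin n) k} {Λ : Type*} [Finite Λ] {iv dv : Λ → ℕ} {e : Λ → M}
    (h : IsDecomp gr r iv dv e) {c : k} (hc : c ≠ 0) (m : ℕ) :
    ∃ g, IsDecomp (truncGr n gr m) (Polynomial.C r + Polynomial.C (C c) * Polynomial.X)
      (rectStart iv dv m) (rectLength dv m) g :=
  (h.isRectDecomp hc m).exists_isDecomp_add (iSupIndep_truncGr hind m)

end TruncatedExtension

section LinearForms

theorem almostCentered_iff_forall_nested {Λ : Type*} {iv dv : Λ → ℕ} (hdv : ∀ α, 1 ≤ dv α)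
    (hnested : Nested iv dv) :
    AlmostCentered iv dv ↔ ∀ m, Nested (rectStart iv dv m) (rectLength dv m) := by
  simp only [AlmostCentered, Prec, abs_le]
  constructor
  · rintro hac m ⟨α, i, hi⟩ ⟨β, j, hj⟩ hlt
    simp only [rectStart, rectLength] at hlt ⊢
    have := hnested α β
    have := hnested β α
    have := hac α β
    have := hac β α
    omega
  · rintro hrect α β ⟨hstart, hend⟩
    have := hdv α
    have := hdv β
    -- For `m = dv α`, the bounds on `L - R` compare the first string of `β` with the strings of
    -- `α` indexed by `L + 1` and `R + 1`.
    constructor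
    · by_contra hcon
      have := hrect (dv α) ⟨β, 0, by omega⟩ ⟨α, iv β - iv α + 1, by omega⟩
      simp only [rectStart, rectLength] at this
      omega
    · by_contra hcon
      have := hrect (dv α) ⟨α, (dv α + iv α) - (dv β + iv β) + 1, by omega⟩ ⟨β, 0, by omega⟩
      simp only [rectStart, rectLength] at this
      omega

variable {k : Type*} [Field k] {n : ℕ} {M : Type*} [AddCommGroup M] [Module k M]
  [Module (MvPolynomial (Fin n) k) M] {gr : ℕ → Submodule k M} {r l : MvPolynomial (Fin n) k}

theorem IsGrading.raisesDegree (hgr : IsGrading k n gr)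
    (hr : r ∈ homogeneousSubmodule (Fin n) k 1) : RaisesDegree gr r := fun i x hx => by
  rw [add_comm]
  exact hgr.2 1 i r hr x hx

variable [CharZero k] [IsScalarTower k (MvPolynomial (Fin n) k) M]
  {Λ : Type*} [Finite Λ] {iv dv : Λ → ℕ} {e : Λ → M}

theorem IsDecomp.isSLAction_truncGr_iff_nested (hind : iSupIndep gr) (hdec : IsDecomp gr r iv dv e)
    {c : k} (hc : c ≠ 0) (m : ℕ) :
    IsSLAction (truncGr n gr m) (Polynomial.C r + Polynomial.C (C c) * Polynomial.X) ↔
      Nested (rectStart iv dv m) (rectLength dv m) := by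
  obtain ⟨g, hg⟩ := hdec.exists_isDecomp_truncGr hind hc m
  exact hg.isSLAction_iff_nested (iSupIndep_truncGr hind m)

theorem IsDecomp.isSLAction_C_add_X_iff_nested (hind : iSupIndep gr) (hdec : IsDecomp gr r iv dv e)
    (m : ℕ) :
    IsSLAction (truncGr n gr m) (Polynomial.C r + Polynomial.X) ↔
      Nested (rectStart iv dv m) (rectLength dv m) := by
  simpa using hdec.isSLAction_truncGr_iff_nested hind (one_ne_zero (α := k)) m

theorem IsDecomp.nested_of_isLinearFormExt (hgr : IsGrading k n gr)
    (hl : l ∈ homogeneousSubmodule (Fin n) k 1) (hSL : IsSLAction gr l)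
    (hdec : IsDecomp gr l iv dv e) {m : ℕ} {w : Polynomial (MvPolynomial (Fin n) k)}
    (hw : IsLinearFormExt w) (hwSL : IsSLAction (truncGr n gr m) w) :
    Nested (rectStart iv dv m) (rectLength dv m) := by
  obtain ⟨r, c, hr, rfl⟩ := hw
  have hind := hgr.1.submodule_iSupIndep
  have : FiniteDimensional k M := hdec.finiteDimensional
  have : FiniteDimensional k (TruncExt k n M m) := finiteDimensional_truncExt
  let z (t : k) : MvPolynomial (Fin n) k := l + t • (r - l)
  let d (t : k) : k := 1 + t • (c - 1)
  let W (t : k) : Polynomial (MvPolynomial (Fin n) k) :=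
    Polynomial.C (z t) + Polynomial.C (C (d t)) * Polynomial.X
  have hz (t : k) : RaisesDegree gr (z t) := hgr.raisesDegree
    (add_mem hl (Submodule.smul_mem _ _ (sub_mem hr hl)))
  have hW_affine : W = fun t => (Polynomial.C l + Polynomial.X) +
      t • (Polynomial.C (r - l) + Polynomial.C (C (c - 1)) * Polynomial.X) := by
    funext t
    simp only [W, z, d, smul_add, ← smul_mul_assoc, Polynomial.smul_C, smul_eq_C_mul, smul_eq_mul,
      map_add, map_mul, map_one]
    ring
  have hW_poly : W ∈ polynomialFamily k (Polynomial (MvPolynomial (Fin n) k)) :=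
    hW_affine ▸ polynomialFamily.add_smul_mem _ _
  have hz_decomp : ∀ᶠ t in Filter.cofinite, ∃ e', IsDecomp gr (z t) iv dv e' :=
    eventually_exists_isDecomp (polynomialFamily.add_smul_mem _ _) hz (t₀ := 0)
      (by simpa [z] using hSL) (by simpa [z] using hdec)
  have hW_SL : ∀ᶠ t in Filter.cofinite, IsSLAction (truncGr n gr m) (W t) :=
    eventually_isSLAction (iSupIndep_truncGr hind m) hW_poly (fun t => (hz t).C_add_C_mul_X _)
      (t₀ := 1) (by simpa [W, z, d] using hwSL)
  have hd : ∀ᶠ t in Filter.cofinite, d t ≠ 0 :=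
    polynomialFamily.eventually_ne_zero (polynomialFamily.add_smul_mem _ _) (t₀ := 0)
      (by simp [d])
  obtain ⟨t, ⟨e', he'⟩, hWt, hdt⟩ := (hz_decomp.and (hW_SL.and hd)).exists
  exact (he'.isSLAction_truncGr_iff_nested hind hdt m).mp hWt

end LinearForms

/-- Let `l ∈ R_1` be a strong Lefschetz element for `M`, `S = k[l]`, with
decomposition `M ≅ ⊕_{α ∈ Λ} S(-i_α)/(l^{d_α})` as a graded `S`-module.  Then the graded
`R[y]`-module `M ⊗_k k[y]/(y^m)` has the strong Lefschetz property for all `m ≥ 0` if and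
only if the decomposition of `M` is almost centered; and in this case `l + y` is a strong
Lefschetz element of `M ⊗_k k[y]/(y^m)` for every `m ≥ 0`. -/
theorem statement4 {k : Type} [Field k] [CharZero k] {n : ℕ} {M : Type} [AddCommGroup M]
    [Module k M] [Module (MvPolynomial (Fin n) k) M]
    [IsScalarTower k (MvPolynomial (Fin n) k) M]
    [Module.Finite (MvPolynomial (Fin n) k) M] [FiniteDimensional k M]
    (gr : ℕ → Submodule k M) (hgr : IsGrading k n gr)
    (l : MvPolynomial (Fin n) k) (hl : l ∈ homogeneousSubmodule (Fin n) k 1)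
    (hSL : IsSLAction gr l)
    {Λ : Type} [Fintype Λ] (iv dv : Λ → ℕ) (e : Λ → M)
    (hdec : IsDecomp gr l iv dv e) :
    ((∀ m : ℕ, ∃ w : Polynomial (MvPolynomial (Fin n) k),
        IsLinearFormExt w ∧ IsSLAction (truncGr n gr m) w) ↔ AlmostCentered iv dv) ∧
      (AlmostCentered iv dv →
        ∀ m : ℕ, IsSLAction (truncGr n gr m) (Polynomial.C l + Polynomial.X)) := by
  have hind := hgr.1.submodule_iSupIndep
  rw [almostCentered_iff_forall_nested hdec.1 ((hdec.isSLAction_iff_nested hind).mp hSL)]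
  have hSL_of_nested (h : ∀ m, Nested (rectStart iv dv m) (rectLength dv m)) (m : ℕ) :
      IsSLAction (truncGr n gr m) (Polynomial.C l + Polynomial.X) :=
    (hdec.isSLAction_C_add_X_iff_nested hind m).mpr (h m)
  refine ⟨⟨fun h m => ?_, fun h m => ?_⟩, hSL_of_nested⟩
  · obtain ⟨w, hw, hwSL⟩ := h m
    exact hdec.nested_of_isLinearFormExt hgr hl hSL hw hwSL
  · exact ⟨Polynomial.C l + Polynomial.X, ⟨l, 1, hl, by simp⟩, hSL_of_nested h m⟩
end
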